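/- Let P and Q be disjoint sets of prime numbers with P infinite. Then there exists an invertible bimeasurable measure-preserving transformation R of a standard atomless probability space (X, μ) such that: (i) R has rank one, i.e. for every ε > 0 and every finite family A₁, …, A_k of measurable sets there exist a measurable set B and an integer h ≥ 1 such that B, R B, …, R^{h−1} B are pairwise disjoint and each A_j differs by a set of measure less than ε from a union of some of the sets R^i B (0 ≤ i < h); (ii) R is weakly mixing, i.e. there is a sequence (m_i) of integers such that for all f, g ∈ L²(X, μ), ∫ f · (g ∘ R^{m_i}) dμ → (∫ f dμ)(∫ g dμ); and (iii) for every n ∈ Q there exists an invertible bimeasurable measure-preserving transformation Ψ of (X, μ) with Ψ ∘ R = R^[n] ∘ Ψ almost everywhere, so that R is conjugate to each power R^n with n ∈ Q. -/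

import Mathlib

open MeasureTheory Filter
open scoped ENNReal

/-!
Fix a finite cyclic group `ZMod h` all of whose prime factors lie in `P`, and let `H` be a product
of many large primes of `P`. By the chinese remainder theorem every `x` in `ZMod (h * H)` has a
residue modulo `h`, and we perturb it to `π x = (x mod h) + C (x mod H)`. If `C` varies slowly and
nearly commutes with multiplication by each prime `q ≤ k` outside `P`, then `π` nearly commutes
with the translation by `1` and with the multiplications by those `q`. If moreover the increments
`C (y + m) - C y` are nearly equidistributed, then `π x` and `π (x + m)` are nearly independent.

For a single large prime `p` take `c x = ∑ (D / w) ξ (w x)`, summed over the divisors `w` of `D`,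
a product of high powers of the primes `q`. The term of `w` at `q x` is `q` times the term of
`q w` at `x`, so `c` commutes with multiplication by `q` up to boundary terms, which form a small
proportion of the divisors. If `ξ` is a slowly varying function of small support, the increments
of `c` along a suitable translation take each value with probability at least `κ / h`. The sum `C`
of such functions over `n` primes, made independent by the chinese remainder theorem, has
increments at distance at most `(1 - κ) ^ n` from the uniform law, while its other defects are at
most `n` times those of `c`.

Iterate with summable errors. By Borel–Cantelli the translations by `1` on the levels converge to
an automorphism `R` of the space of digits, and the multiplications by `q` to an automorphism `Ψ`.
The relation `q (x + 1) = q x + q` gives `Ψ R = R ^ q Ψ`, the points over `0` on the successive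
levels are the bases of Rokhlin towers for `R`, and `R` mixes along the sequence of the
translations `m`.
-/

namespace RankOne

section Properties

variable {X : Type*} [MeasurableSpace X]

/-- `R` has rank one: any finite family of measurable sets is approximated by unions of levels of a
single Rokhlin tower `B, R B, …, R^(h-1) B`. -/
def IsRankOne (R : X ≃ᵐ X) (μ : Measure X) : Prop :=
  ∀ ε : ℝ≥0∞, 0 < ε → ∀ (k : ℕ) (A : Fin k → Set X), (∀ j, MeasurableSet (A j)) →
    ∃ (B : Set X) (h : ℕ), MeasurableSet B ∧ 1 ≤ h ∧
      (∀ i < h, ∀ j < h, i ≠ j → Disjoint (R^[i] '' B) (R^[j] '' B)) ∧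
      ∀ j, ∃ s : Finset ℕ, (∀ i ∈ s, i < h) ∧ μ (symmDiff (A j) (⋃ i ∈ s, R^[i] '' B)) < ε

/-- `R` is weakly mixing, in the form that it is mixing along some sequence of integers. -/
def IsWeaklyMixing (R : X ≃ᵐ X) (μ : Measure X) : Prop :=
  ∃ m : ℕ → ℤ, ∀ f g : Lp ℝ 2 μ,
    Tendsto (fun i => ∫ x, f x * g ((R.toEquiv ^ m i) x) ∂μ) atTop
      (nhds ((∫ x, f x ∂μ) * ∫ x, g x ∂μ))

/-- `R` is conjugate to its `n`-th power by a measure-preserving automorphism. -/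
def IsConjugateToPower (R : X ≃ᵐ X) (μ : Measure X) (n : ℕ) : Prop :=
  ∃ Ψ : X ≃ᵐ X, MeasurePreserving Ψ μ μ ∧ ∀ᵐ x ∂μ, Ψ (R x) = R^[n] (Ψ x)

end Properties

/-! ### Counting in finite cyclic groups -/

section Counting

open Finset

variable {α ι G : Type*} [Fintype α]

lemma card_filter_exists_mem_le (I : Finset ι) (s : ι → α → Prop) [∀ i, DecidablePred (s i)]
    {n : ℕ} (hn : ∀ i ∈ I, #{x | s i x} ≤ n) : #{x | ∃ i ∈ I, s i x} ≤ #I * n := by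
  classical
  have hsub : ({x | ∃ i ∈ I, s i x} : Finset α) ⊆ I.biUnion fun i ↦ {x | s i x} := by
    intro x hx
    simpa using hx
  exact (card_le_card hsub).trans (card_biUnion_le_card_mul I _ n hn)

lemma card_filter_or_le (s t : α → Prop) [DecidablePred s] [DecidablePred t] :
    #{x | s x ∨ t x} ≤ #{x | s x} + #{x | t x} := by
  classical
  rw [filter_or]
  exact card_union_le _ _

lemma card_filter_comp_equiv {β : Type*} [Fintype β] (e : α ≃ β) (s : β → Prop)
    [DecidablePred s] : #{x | s (e x)} = #{y | s y} :=
  card_equiv e (by simp)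

lemma card_filter_natCast_mul {p w : ℕ} [NeZero p] (hw : w.Coprime p) (s : ZMod p → Prop)
    [DecidablePred s] : #{x : ZMod p | s (w * x)} = #{y | s y} :=
  card_filter_comp_equiv (ZMod.unitOfCoprime w hw).mulLeft s

lemma card_filter_val_mem_le {p : ℕ} [NeZero p] (s : Finset ℕ) :
    #{y : ZMod p | y.val ∈ s} ≤ #s :=
  card_le_card_of_injOn ZMod.val (fun y hy ↦ by simpa using hy) (ZMod.val_injective p).injOn

/-- The average over `m` of the number of returns to `T` under translation by `m` is
`#T ^ 2 / card G`. -/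
lemma exists_card_filter_add_mem_mul_le [AddGroup G] [Fintype G] [DecidableEq G] (T : Finset G) :
    ∃ m, #{x ∈ T | x + m ∈ T} * Fintype.card G ≤ #T * #T := by
  have hsum : ∑ m, #{x ∈ T | x + m ∈ T} = #T * #T := by
    simp only [card_filter]
    rw [sum_comm, ← smul_eq_mul, ← sum_const]
    refine sum_congr rfl fun x _ ↦ ?_
    rw [← card_filter, ← card_filter_comp_equiv (Equiv.addLeft x).symm]
    simp
  obtain ⟨m, -, hm⟩ := exists_le_of_sum_le (s := univ)
    (f := fun m ↦ #{x ∈ T | x + m ∈ T} * Fintype.card G) (g := fun _ ↦ #T * #T)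
    univ_nonempty (by rw [← sum_mul, hsum, sum_const, card_univ, smul_eq_mul, mul_comm])
  exact ⟨m, hm⟩

lemma exists_forall_le_card_filter_sub_eq {S : Type*} [AddGroup S] [DecidableEq S] [AddGroup G]
    [Fintype G] {f : G → S} {T : Finset G} {K : ℕ} (hf : ∀ x ∉ T, f x = 0)
    (hK : ∀ u, K ≤ #{x ∈ T | f x = u}) (hT : 2 * (#T * #T) ≤ K * Fintype.card G) :
    ∃ m, ∀ u, K ≤ 2 * #{x | f (x + m) - f x = u} := by
  classical
  obtain ⟨m, hm⟩ := exists_card_filter_add_mem_mul_le T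
  have hreturn : 2 * #{x ∈ T | x + m ∈ T} ≤ K :=
    Nat.le_of_mul_le_mul_right (by linarith) (Fintype.card_pos (α := G))
  refine ⟨m, fun u ↦ ?_⟩
  have hsub : ({x | x + m ∈ T ∧ f (x + m) = u} : Finset G) ⊆
      {x ∈ T | x + m ∈ T} ∪ ({x | f (x + m) - f x = u} : Finset G) := by
    intro x hx
    by_cases hxT : x ∈ T <;> simp_all
  have hshift : #{x | x + m ∈ T ∧ f (x + m) = u} = #{x ∈ T | f x = u} := by
    refine card_equiv (Equiv.addRight m) fun x ↦ ?_
    simp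
  have hcount := (card_le_card hsub).trans (card_union_le _ _)
  have := hK u
  lia

lemma card_filter_add_natCast_ne_le {p : ℕ} [NeZero p] {S : Type*} [DecidableEq S] (ξ : ZMod p → S)
    (w : ℕ) :
    #{y | ξ (y + w) ≠ ξ y} ≤ w * #{y | ξ (y + 1) ≠ ξ y} := by
  induction w with
  | zero => simp
  | succ w ih =>
    have hsub : ({y | ξ (y + (w + 1 : ℕ)) ≠ ξ y} : Finset (ZMod p)) ⊆
        ({y | ξ (y + w) ≠ ξ y ∨ ξ (y + w + 1) ≠ ξ (y + w)} : Finset (ZMod p)) := by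
      intro y
      simp only [mem_filter_univ, Nat.cast_add, Nat.cast_one, ← add_assoc]
      grind
    have hshift := card_filter_comp_equiv (Equiv.addRight (w : ZMod p)) fun y ↦ ξ (y + 1) ≠ ξ y
    calc #{y | ξ (y + (w + 1 : ℕ)) ≠ ξ y}
        ≤ #{y | ξ (y + w) ≠ ξ y} + #{y | ξ (y + w + 1) ≠ ξ (y + w)} :=
          (card_le_card hsub).trans (card_filter_or_le _ _)
      _ ≤ w * #{y | ξ (y + 1) ≠ ξ y} + #{y | ξ (y + 1) ≠ ξ y} := add_le_add ih hshift.le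
      _ = (w + 1) * #{y | ξ (y + 1) ≠ ξ y} := by ring

end Counting

section DilationSum

open Finset

/-- The sum of the dilates `x ↦ ξ (w x)` over the divisors `w` of `D`, weighted by `D / w`. The
weights make it almost equivariant under multiplication by a prime `q` dividing `D` to a high
power: the term of `w` at `q x` is `q` times the term of `q w` at `x`. -/
def dilationSum {R S : Type*} [Semiring R] [Semiring S] (D : ℕ) (ξ : R → S) (x : R) : S :=
  ∑ w ∈ D.divisors, ((D / w : ℕ) : S) * ξ (w * x)

lemma dilationSum_natCast_mul {R S : Type*} [Semiring R] [Semiring S] {D q : ℕ} {ξ : R → S}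
    {x : R} (hD : D ≠ 0) (hq : q ≠ 0)
    (hlow : ∀ w ∈ D.divisors, ¬ q * w ∣ D → ξ ((q * w : ℕ) * x) = 0)
    (hhigh : ∀ w ∈ D.divisors, ¬ q ∣ w → ξ (w * x) = 0) :
    dilationSum D ξ (q * x) = q * dilationSum D ξ x := by
  have hterm (w : ℕ) (hw : q * w ∣ D) : ((D / w : ℕ) : S) * ξ (w * (q * x)) =
      q * (((D / (q * w) : ℕ) : S) * ξ ((q * w : ℕ) * x)) := by
    obtain ⟨k, rfl⟩ := hw
    have hqw : 0 < q * w := (left_ne_zero_of_mul hD).bot_lt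
    rw [Nat.mul_div_cancel_left k hqw, mul_comm q w, mul_assoc w q k,
      Nat.mul_div_cancel_left _ (right_ne_zero_of_mul hqw.ne').bot_lt, Nat.cast_mul, Nat.cast_mul,
      mul_assoc, mul_assoc]
  have hcast (w : ℕ) : (w : R) * (q * x) = (q * w : ℕ) * x := by
    rw [← mul_assoc, ← Nat.cast_mul, mul_comm w]
  have hdvd (w : ℕ) (hw : w ∈ D.divisors)
      (h : ((D / w : ℕ) : S) * ξ (w * (q * x)) ≠ 0) : q * w ∣ D :=
    not_imp_comm.1 (fun h' ↦ by rw [hcast, hlow w hw h', mul_zero]) h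
  simp only [dilationSum, mul_sum]
  refine sum_bij_ne_zero (fun w _ _ ↦ q * w) (fun w hw h ↦ ?_)
    (fun w _ _ w' _ _ h ↦ Nat.eq_of_mul_eq_mul_left hq.bot_lt h) (fun w hw h ↦ ?_)
    fun w hw h ↦ hterm w (hdvd w hw h)
  · exact Nat.mem_divisors.2 ⟨hdvd w hw h, hD⟩
  · have hqw : q ∣ w := not_imp_comm.1 (fun h' ↦ by rw [hhigh w hw h', mul_zero, mul_zero]) h
    obtain ⟨v, rfl⟩ := hqw
    have hvD := Nat.dvd_of_mem_divisors hw
    refine ⟨v, Nat.mem_divisors.2 ⟨(dvd_mul_left v q).trans hvD, hD⟩, ?_, rfl⟩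
    rwa [hterm v hvD]

lemma succ_mul_card_filter_not_dvd_le {q L D : ℕ} (hq : q.Prime) (hD : q ^ L ∣ D) :
    (L + 1) * #{w ∈ D.divisors | ¬ q ∣ w} ≤ #D.divisors := by
  have := Fact.mk hq
  rw [mul_comm, ← card_range (L + 1), ← card_product]
  refine card_le_card_of_injOn (fun z ↦ q ^ z.2 * z.1) ?_ ?_
  · rintro ⟨w, i⟩ hz
    simp only [coe_product, Set.mem_prod, mem_coe, mem_filter, Nat.mem_divisors, mem_range] at hz ⊢
    obtain ⟨⟨⟨hwD, hD0⟩, hqw⟩, hi⟩ := hz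
    have hcop : (q ^ i).Coprime w := ((hq.coprime_iff_not_dvd).2 hqw).pow_left i
    exact ⟨hcop.mul_dvd_of_dvd_of_dvd ((pow_dvd_pow q (by lia)).trans hD) hwD, hD0⟩
  · have hval {w : ℕ} (hw : w ∈ D.divisors) (hqw : ¬ q ∣ w) (i : ℕ) :
        padicValNat q (q ^ i * w) = i := by
      rw [padicValNat.mul (pow_ne_zero _ hq.ne_zero) (Nat.pos_of_mem_divisors hw).ne',
        padicValNat.prime_pow, padicValNat.eq_zero_of_not_dvd hqw, add_zero]
    rintro ⟨w, i⟩ hz ⟨w', i'⟩ hz' heq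
    simp only [coe_product, Set.mem_prod, mem_coe, mem_filter] at hz hz' heq
    obtain rfl : i = i' := by
      rw [← hval hz.1.1 hz.1.2 i, heq, hval hz'.1.1 hz'.1.2]
    rw [Nat.eq_of_mul_eq_mul_left (pow_pos hq.pos i) heq]

lemma card_filter_not_mul_dvd_le {q D : ℕ} :
    #{w ∈ D.divisors | ¬ q * w ∣ D} ≤ #{w ∈ D.divisors | ¬ q ∣ w} := by
  refine card_le_card_of_injOn (fun w ↦ D / w) (fun w hw ↦ ?_) fun w hw w' hw' heq ↦ ?_
  · simp only [mem_coe, mem_filter, Nat.mem_divisors] at hw ⊢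
    exact ⟨⟨Nat.div_dvd_of_dvd hw.1.1, hw.1.2⟩,
      fun h ↦ hw.2 (mul_comm w q ▸ Nat.mul_dvd_of_dvd_div hw.1.1 h)⟩
  · simp only [mem_coe, mem_filter, Nat.mem_divisors] at hw hw'
    dsimp only at heq
    rw [← Nat.div_div_self hw.1.1 hw.1.2, heq, Nat.div_div_self hw'.1.1 hw'.1.2]

variable {p D : ℕ} [NeZero p] {S : Type*} [Semiring S] [DecidableEq S]

lemma card_filter_dilationSum_add_one_ne_le (ξ : ZMod p → S) (hD : D.Coprime p) :
    #{x | dilationSum D ξ (x + 1) ≠ dilationSum D ξ x} ≤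
      D * (D * #{y | ξ (y + 1) ≠ ξ y}) := by
  have hsub : ({x | dilationSum D ξ (x + 1) ≠ dilationSum D ξ x} : Finset (ZMod p)) ⊆
      ({x | ∃ w ∈ D.divisors, ξ (w * x + w) ≠ ξ (w * x)} : Finset (ZMod p)) := by
    intro x
    simp only [mem_filter_univ]
    contrapose!
    intro h
    exact sum_congr rfl fun w hw ↦ by rw [mul_add, mul_one, h w hw]
  refine (card_le_card hsub).trans ((card_filter_exists_mem_le _ _ fun w hw ↦ ?_).trans
    (Nat.mul_le_mul_right _ (Nat.card_divisors_le_self D)))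
  rw [card_filter_natCast_mul (hD.coprime_dvd_left (Nat.dvd_of_mem_divisors hw))
    fun y ↦ ξ (y + w) ≠ ξ y]
  exact (card_filter_add_natCast_ne_le ξ w).trans (Nat.mul_le_mul_right _ (Nat.divisor_le hw))

lemma card_filter_dilationSum_natCast_mul_ne_le (ξ : ZMod p → S) {q : ℕ} (hD0 : D ≠ 0)
    (hq0 : q ≠ 0) (hD : D.Coprime p) (hq : q.Coprime p) :
    #{x | dilationSum D ξ (q * x) ≠ q * dilationSum D ξ x} ≤
      2 * #{w ∈ D.divisors | ¬ q ∣ w} * #{y | ξ y ≠ 0} := by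
  have hsub : ({x | dilationSum D ξ (q * x) ≠ q * dilationSum D ξ x} : Finset (ZMod p)) ⊆
      ({x | (∃ w ∈ D.divisors.filter fun w ↦ ¬ q * w ∣ D, ξ ((q * w : ℕ) * x) ≠ 0) ∨
        ∃ w ∈ D.divisors.filter fun w ↦ ¬ q ∣ w, ξ (w * x) ≠ 0} : Finset (ZMod p)) := by
    intro x
    simp only [mem_filter, mem_univ, true_and]
    contrapose!
    exact fun h ↦ dilationSum_natCast_mul hD0 hq0 (fun w hw h' ↦ h.1 w ⟨hw, h'⟩)
      fun w hw h' ↦ h.2 w ⟨hw, h'⟩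
  have hcop {w : ℕ} (hw : w ∈ D.divisors) : w.Coprime p :=
    hD.coprime_dvd_left (Nat.dvd_of_mem_divisors hw)
  have hmul {w : ℕ} (hw : w.Coprime p) : #{x : ZMod p | ξ (w * x) ≠ 0} = #{y | ξ y ≠ 0} :=
    card_filter_natCast_mul hw fun y ↦ ξ y ≠ 0
  calc #{x | dilationSum D ξ (q * x) ≠ q * dilationSum D ξ x}
      ≤ #{w ∈ D.divisors | ¬ q * w ∣ D} * #{y | ξ y ≠ 0} +
          #{w ∈ D.divisors | ¬ q ∣ w} * #{y | ξ y ≠ 0} := by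
        refine (card_le_card hsub).trans ((card_filter_or_le _ _).trans (add_le_add ?_ ?_)) <;>
          refine card_filter_exists_mem_le _ _ fun w hw ↦ (hmul ?_).le
        · exact hq.mul_left (hcop (mem_filter.1 hw).1)
        · exact hcop (mem_filter.1 hw).1
    _ ≤ 2 * #{w ∈ D.divisors | ¬ q ∣ w} * #{y | ξ y ≠ 0} := by
        rw [two_mul, add_mul]
        gcongr ?_ * _ + _
        exact card_filter_not_mul_dvd_le

/-- If the dilates of the block `B` are disjoint, only one term of the dilation sum is nonzero at a
time, and each value is taken on each dilate as often as on `B`. -/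
lemma le_card_filter_dilationSum_eq {h J : ℕ} {ξ : ZMod p → ZMod h} {B : Finset (ZMod p)}
    (hD : D.Coprime p) (hDh : D.Coprime h) (hξ : ∀ y ∉ B, ξ y = 0)
    (hJ : ∀ v, J ≤ #{y ∈ B | ξ y = v})
    (hB : ∀ w ∈ D.divisors, ∀ w' ∈ D.divisors, ∀ x : ZMod p, w * x ∈ B → w' * x ∈ B → w = w')
    (u : ZMod h) :
    #D.divisors * J ≤ #{x : ZMod p | (∃ w ∈ D.divisors, w * x ∈ B) ∧ dilationSum D ξ x = u} := by
  let A (w : ℕ) : Finset (ZMod p) := {x | w * x ∈ B ∧ ((D / w : ℕ) : ZMod h) * ξ (w * x) = u}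
  have hA : ∀ w ∈ D.divisors, J ≤ #(A w) := fun w hw ↦ by
    have hwD := Nat.dvd_of_mem_divisors hw
    have hunit : IsUnit ((D / w : ℕ) : ZMod h) :=
      (ZMod.isUnit_iff_coprime _ _).2 (hDh.coprime_dvd_left (Nat.div_dvd_of_dvd hwD))
    obtain ⟨v, rfl⟩ := hunit.dvd (a := u)
    rw [card_filter_natCast_mul (hD.coprime_dvd_left hwD)
      fun y ↦ y ∈ B ∧ ((D / w : ℕ) : ZMod h) * ξ y = _]
    refine (hJ v).trans (card_le_card fun y hy ↦ ?_)
    simp only [mem_filter] at hy ⊢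
    exact ⟨mem_univ y, hy.1, by rw [hy.2]⟩
  have hsub : D.divisors.biUnion A ⊆
      ({x | (∃ w ∈ D.divisors, w * x ∈ B) ∧ dilationSum D ξ x = u} : Finset (ZMod p)) := by
    intro x hx
    simp only [A, mem_biUnion, mem_filter_univ] at hx ⊢
    obtain ⟨w, hw, hxB, rfl⟩ := hx
    refine ⟨⟨w, hw, hxB⟩, sum_eq_single_of_mem w hw fun w' hw' hne ↦ ?_⟩
    rw [hξ _ fun h ↦ hne (hB w' hw' w hw x h hxB), mul_zero]
  have hdisj : (D.divisors : Set ℕ).PairwiseDisjoint A := fun w hw w' hw' hne ↦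
    disjoint_left.2 fun x hx hx' ↦
      hne (hB w hw w' hw' x (mem_filter_univ x |>.1 hx).1 (mem_filter_univ x |>.1 hx').1)
  calc #D.divisors * J ≤ ∑ w ∈ D.divisors, #(A w) := card_nsmul_le_sum _ _ _ hA
    _ = #(D.divisors.biUnion A) := (card_biUnion hdisj).symm
    _ ≤ _ := card_le_card hsub

/-- The dilated blocks occupy so small a part of `ZMod p` that some translate of their union hardly
overlaps it. -/
lemma exists_forall_le_card_filter_dilationSum_sub_eq {h J : ℕ} {ξ : ZMod p → ZMod h}
    {B : Finset (ZMod p)} (hD : D.Coprime p) (hDh : D.Coprime h) (hξ : ∀ y ∉ B, ξ y = 0)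
    (hJ : ∀ v, J ≤ #{y ∈ B | ξ y = v}) (hBJ : #B ≤ h * J)
    (hB : ∀ w ∈ D.divisors, ∀ w' ∈ D.divisors, ∀ x : ZMod p, w * x ∈ B → w' * x ∈ B → w = w')
    (hp : 2 * #D.divisors * h ^ 2 * J ≤ p) :
    ∃ m, ∀ u, #D.divisors * J ≤
      2 * #{x | dilationSum D ξ (x + m) - dilationSum D ξ x = u} := by
  let T : Finset (ZMod p) := {x | ∃ w ∈ D.divisors, w * x ∈ B}
  have hT : #T ≤ #D.divisors * (h * J) :=
    card_filter_exists_mem_le _ _ fun w hw ↦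
      ((card_filter_natCast_mul (hD.coprime_dvd_left (Nat.dvd_of_mem_divisors hw)) (· ∈ B)).trans
        (by simp)).le.trans hBJ
  refine exists_forall_le_card_filter_sub_eq (T := T) (fun x hx ↦ sum_eq_zero fun w hw ↦ ?_)
    (fun u ↦ ?_) ?_
  · rw [hξ _ fun h ↦ hx ((mem_filter_univ x).2 ⟨w, hw, h⟩), mul_zero]
  · simpa only [T, filter_filter] using le_card_filter_dilationSum_eq hD hDh hξ hJ hB u
  · rw [ZMod.card]
    calc 2 * (#T * #T) ≤ 2 * (#D.divisors * (h * J) * (#D.divisors * (h * J))) := by gcongr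
      _ = #D.divisors * J * (2 * #D.divisors * h ^ 2 * J) := by ring
      _ ≤ #D.divisors * J * p := by gcongr

end DilationSum

section Staircase

open Finset

/-- The function on `ℕ` climbing through the residues `0, 1, …, h - 1` in steps of length `J`
starting at `a`, and zero before `a` and from `a + h * J` on. -/
def staircase (h a J n : ℕ) : ZMod h :=
  if n ∈ Ico a (a + h * J) then ((n - a) / J : ℕ) else 0

lemma staircase_of_notMem {h a J n : ℕ} (hn : n ∉ Ico a (a + h * J)) : staircase h a J n = 0 :=
  if_neg hn

lemma staircase_succ {h a J n : ℕ} (hJ : 0 < J) (hn : ∀ i ≤ h, n + 1 ≠ a + i * J) :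
    staircase h a J (n + 1) = staircase h a J n := by
  have hstart := hn 0 h.zero_le
  have hend := hn h le_rfl
  by_cases hmem : n ∈ Ico a (a + h * J)
  · have hmem' : n + 1 ∈ Ico a (a + h * J) := by grind
    obtain ⟨d, rfl⟩ := Nat.exists_eq_add_of_le (mem_Ico.1 hmem).1
    have hdvd : ¬ J ∣ d + 1 := by
      rintro ⟨i, hi⟩
      refine hn i ?_ (by lia)
      by_contra! hlt
      have := Nat.mul_le_mul_left J hlt
      grind
    rw [staircase, staircase, if_pos hmem, if_pos hmem', add_assoc, Nat.add_sub_cancel_left,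
      Nat.add_sub_cancel_left, Nat.succ_div_of_not_dvd hdvd]
  · have hmem' : n + 1 ∉ Ico a (a + h * J) := by grind
    rw [staircase_of_notMem hmem, staircase_of_notMem hmem']

lemma staircase_add {h a J j : ℕ} [NeZero h] (v : ZMod h) (hj : j < J) :
    a + (v.val * J + j) < a + h * J ∧ staircase h a J (a + (v.val * J + j)) = v := by
  have hlt : a + (v.val * J + j) < a + h * J := by
    have := Nat.mul_le_mul_right J (ZMod.val_lt v)
    grind
  refine ⟨hlt, ?_⟩
  rw [staircase, if_pos (by grind), Nat.add_sub_cancel_left, add_comm,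
    Nat.add_mul_div_right _ _ (by lia), Nat.div_eq_of_lt hj, zero_add, ZMod.natCast_zmod_val]

/-- The residues modulo `p` whose least nonnegative representative lies in `[a, b)`. -/
def residueIco (p a b : ℕ) [NeZero p] : Finset (ZMod p) := {y | y.val ∈ Ico a b}

variable {p h a J D : ℕ} [NeZero p]

lemma mem_residueIco {b : ℕ} {y : ZMod p} : y ∈ residueIco p a b ↔ y.val ∈ Ico a b := by
  simp [residueIco]

lemma card_residueIco_le {b : ℕ} : #(residueIco p a b) ≤ b - a :=
  (card_filter_val_mem_le _).trans (Nat.card_Ico a b).le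

lemma card_filter_staircase_val_add_one_ne_le (hJ : 0 < J) :
    #{y : ZMod p | staircase h a J (y + 1).val ≠ staircase h a J y.val} ≤ h + 2 := by
  let jumps : Finset ℕ := insert (p - 1) ((range (h + 1)).image fun i ↦ a + i * J - 1)
  have hsub : ({y : ZMod p | staircase h a J (y + 1).val ≠ staircase h a J y.val} :
      Finset (ZMod p)) ⊆
      ({y | y.val ∈ jumps} : Finset (ZMod p)) := by
    intro y
    simp only [mem_filter, mem_univ, true_and, jumps, mem_insert, mem_image, mem_range]
    contrapose!
    rintro ⟨hwrap, hjump⟩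
    have hyp := y.val_lt
    have hlt : y.val + 1 < p := by lia
    have : Fact (1 < p) := ⟨by lia⟩
    rw [ZMod.val_add_of_lt (by rwa [ZMod.val_one]), ZMod.val_one]
    exact staircase_succ hJ fun i hi h' ↦ hjump i (by lia) (by lia)
  calc _ ≤ #jumps := (card_le_card hsub).trans (card_filter_val_mem_le jumps)
    _ ≤ #((range (h + 1)).image fun i ↦ a + i * J - 1) + 1 := card_insert_le _ _
    _ ≤ h + 2 := by simpa using card_image_le (s := range (h + 1)) (f := fun i ↦ a + i * J - 1)

lemma le_card_filter_staircase_val_eq [NeZero h] (hp : a + h * J ≤ p) (v : ZMod h) :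
    J ≤ #{y ∈ residueIco p a (a + h * J) | staircase h a J y.val = v} := by
  have hval {j : ℕ} (hj : j < J) :
      ((a + (v.val * J + j) : ℕ) : ZMod p).val = a + (v.val * J + j) :=
    ZMod.val_cast_of_lt ((staircase_add v hj).1.trans_le hp)
  rw [← card_range J]
  refine card_le_card_of_injOn (fun j ↦ ((a + (v.val * J + j) : ℕ) : ZMod p)) (fun j hj ↦ ?_)
    fun i hi j hj hij ↦ ?_
  · have hj' := mem_range.1 hj
    obtain ⟨hlt, heq⟩ := staircase_add (a := a) v hj'
    rw [mem_coe, mem_filter, mem_residueIco, hval hj', card_range]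
    exact ⟨mem_Ico.2 ⟨by lia, hlt⟩, heq⟩
  · have := congrArg ZMod.val hij
    dsimp only at this
    rw [hval (mem_range.1 hi), hval (mem_range.1 hj)] at this
    lia

/-- If `w < w'` then `w' * [a, a + l)` lies to the right of `w * [a, a + l)`, and neither wraps
around modulo `p`. -/
lemma eq_of_natCast_mul_mem_residueIco {l w w' : ℕ} {x : ZMod p} (ha : D * l ≤ a)
    (hp : D * (a + l) ≤ p) (hw : w ∈ D.divisors) (hw' : w' ∈ D.divisors)
    (hx : w * x ∈ residueIco p a (a + l)) (hx' : w' * x ∈ residueIco p a (a + l)) : w = w' := by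
  by_contra hne
  wlog hlt : w < w' generalizing w w'
  · exact this hw' hw hx' hx (Ne.symm hne) (by lia)
  rw [mem_residueIco, mem_Ico] at hx hx'
  set s := (w * x).val with hs
  set s' := (w' * x).val with hs'
  have hbound {v t : ℕ} (hv : v ∈ D.divisors) (ht : t < a + l) : v * t < p :=
    calc v * t ≤ D * t := Nat.mul_le_mul_right _ (Nat.divisor_le hv)
      _ < D * (a + l) := Nat.mul_lt_mul_of_pos_left ht
          ((Nat.pos_of_mem_divisors hw).trans_le (Nat.divisor_le hw))
      _ ≤ p := hp
  have hcong : ((w' * s : ℕ) : ZMod p) = (w * s' : ℕ) := by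
    rw [Nat.cast_mul, Nat.cast_mul, hs, hs', ZMod.natCast_zmod_val, ZMod.natCast_zmod_val,
      mul_left_comm]
  have heq : w' * s = w * s' := by
    have := congrArg ZMod.val hcong
    rwa [ZMod.val_cast_of_lt (hbound hw' hx.2), ZMod.val_cast_of_lt (hbound hw hx'.2)] at this
  have hright : (w + 1) * a ≤ w' * s := Nat.mul_le_mul hlt hx.1
  have hleft : w * s' < w * (a + l) := Nat.mul_lt_mul_of_pos_left hx'.2 (Nat.pos_of_mem_divisors hw)
  have hwl : w * l ≤ a := (Nat.mul_le_mul_right l (Nat.divisor_le hw)).trans ha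
  nlinarith

/-- The cocycle on `ZMod p` from which the tower is built: the dilation sum over the divisors of
`D` of the staircase starting at `D * (h * J)`, which is far enough for its dilates to have
disjoint supports. -/
def staircaseSum (p h J D : ℕ) : ZMod p → ZMod h :=
  dilationSum D fun y ↦ staircase h (D * (h * J)) J y.val

lemma card_filter_staircaseSum_add_one_ne_le (hJ : 0 < J) (hD : D.Coprime p) :
    #{x | staircaseSum p h J D (x + 1) ≠ staircaseSum p h J D x} ≤ D * (D * (h + 2)) := by
  refine (card_filter_dilationSum_add_one_ne_le _ hD).trans ?_
  gcongr
  exact card_filter_staircase_val_add_one_ne_le hJ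

lemma card_filter_staircaseSum_natCast_mul_ne_le {q : ℕ} (hD0 : D ≠ 0) (hq0 : q ≠ 0)
    (hD : D.Coprime p) (hq : q.Coprime p) :
    #{x | staircaseSum p h J D (q * x) ≠ q * staircaseSum p h J D x} ≤
      2 * #{w ∈ D.divisors | ¬ q ∣ w} * (h * J) := by
  refine (card_filter_dilationSum_natCast_mul_ne_le _ hD0 hq0 hD hq).trans ?_
  gcongr
  refine (card_le_card (t := residueIco p (D * (h * J)) (D * (h * J) + h * J))
    fun y hy ↦ ?_).trans (card_residueIco_le.trans (Nat.add_sub_cancel_left ..).le)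
  by_contra hy'
  exact (mem_filter_univ y |>.1 hy) (staircase_of_notMem fun h ↦ hy' (mem_residueIco.2 h))

lemma exists_forall_le_card_filter_staircaseSum_sub_eq [NeZero h] (hD0 : D ≠ 0)
    (hD : D.Coprime p) (hDh : D.Coprime h) (hp : 2 * h ^ 2 * (D * (D + 1)) * J ≤ p) :
    ∃ m, ∀ u, #D.divisors * J ≤
      2 * #{x | staircaseSum p h J D (x + m) - staircaseSum p h J D x = u} := by
  have hhh : h ≤ h ^ 2 := Nat.le_self_pow two_ne_zero h
  have hdilate : D * (D * (h * J) + h * J) ≤ p :=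
    calc D * (D * (h * J) + h * J) = 1 * h * (D * (D + 1)) * J := by ring
      _ ≤ 2 * h ^ 2 * (D * (D + 1)) * J := by gcongr; norm_num
      _ ≤ p := hp
  refine exists_forall_le_card_filter_dilationSum_sub_eq
    (B := residueIco p (D * (h * J)) (D * (h * J) + h * J)) hD hDh
    (fun y hy ↦ staircase_of_notMem fun h ↦ hy (mem_residueIco.2 h))
    (le_card_filter_staircase_val_eq ((Nat.le_mul_of_pos_left _ hD0.bot_lt).trans hdilate))
    (card_residueIco_le.trans (Nat.add_sub_cancel_left ..).le)
    (fun w hw w' hw' x ↦ eq_of_natCast_mul_mem_residueIco le_rfl hdilate hw hw') ?_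
  calc 2 * #D.divisors * h ^ 2 * J ≤ 2 * (D * (D + 1)) * h ^ 2 * J := by
        gcongr
        exact (Nat.card_divisors_le_self D).trans (Nat.le_mul_of_pos_right D D.succ_pos)
    _ ≤ p := by linarith

end Staircase

section Uniform

open Finset ProbabilityTheory

/-- The uniform probability measure on a finite type. -/
noncomputable abbrev uniform (α : Type*) [MeasurableSpace α] : Measure α := uniformOn Set.univ

variable {α β : Type*} [MeasurableSpace α] [MeasurableSpace β] [MeasurableSingletonClass α]
  [MeasurableSingletonClass β]

lemma uniform_singleton [Fintype α] (a : α) : uniform α {a} = (Fintype.card α : ℝ≥0∞)⁻¹ := by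
  rw [uniformOn_univ, Measure.count_singleton, one_div]

lemma uniform_real_setOf [Fintype α] (s : α → Prop) [DecidablePred s] :
    (uniform α).real {x | s x} = #{x | s x} / Fintype.card α := by
  rw [measureReal_def, uniformOn_univ, ENNReal.toReal_div, ENNReal.toReal_natCast,
    ← Finset.coe_filter_univ s, Measure.count_apply_finset, ENNReal.toReal_natCast]

lemma measurePreserving_uniform [Finite α] (e : α ≃ β) :
    MeasurePreserving e (uniform α) (uniform β) := by
  have := Fintype.ofFinite α
  have := Fintype.ofEquiv α e
  refine ⟨.of_discrete, Measure.ext_of_singleton fun b ↦ ?_⟩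
  rw [Measure.map_apply .of_discrete (measurableSet_singleton b), ← e.image_symm_eq_preimage,
    Set.image_singleton, uniform_singleton, uniform_singleton, Fintype.card_congr e]

lemma uniform_prod [Finite α] [Finite β] : uniform (α × β) = (uniform α).prod (uniform β) := by
  have := Fintype.ofFinite α
  have := Fintype.ofFinite β
  refine Measure.ext_of_singleton fun z ↦ ?_
  rw [← Set.singleton_prod_singleton, Measure.prod_prod, Set.singleton_prod_singleton,
    uniform_singleton, uniform_singleton, uniform_singleton, Fintype.card_prod, Nat.cast_mul,
    ENNReal.mul_inv (.inr (ENNReal.natCast_ne_top _)) (.inl (ENNReal.natCast_ne_top _))]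

end Uniform

section RandomWalk

variable {α β S : Type*} [MeasurableSpace α] [MeasurableSpace β] [AddGroup S] [Fintype S]
  [MeasurableSpace S] [MeasurableSingletonClass S] {μ : Measure α} {ν : Measure β}
  [IsProbabilityMeasure μ] [IsProbabilityMeasure ν] {F : α → S} {G : β → S}

lemma measureReal_prod_add_eq (hF : Measurable F) (hG : Measurable G) (u : S) :
    (μ.prod ν).real {z | F z.1 + G z.2 = u} =
      ∑ v, μ.real (F ⁻¹' {u - v}) * ν.real (G ⁻¹' {v}) := by
  have hunion : {z : α × β | F z.1 + G z.2 = u} = ⋃ v, (F ⁻¹' {u - v}) ×ˢ (G ⁻¹' {v}) := by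
    ext z
    simp [eq_sub_iff_add_eq]
  rw [hunion, measureReal_iUnion_fintype]
  · simp only [measureReal_prod_prod]
  · exact fun v w hvw ↦ Set.disjoint_left.2 fun z hz hz' ↦ hvw (hz.2.symm.trans hz'.2)
  · exact fun v ↦ (hF (measurableSet_singleton _)).prod (hG (measurableSet_singleton _))

/-- A step whose law dominates `κ` times the uniform law brings the law of a random walk closer to
uniform by the factor `1 - κ`. -/
lemma abs_measureReal_prod_add_eq_sub_le (hF : Measurable F) (hG : Measurable G) {δ κ : ℝ}
    (hδ : ∀ u, |μ.real (F ⁻¹' {u}) - 1 / Fintype.card S| ≤ δ)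
    (hκ : ∀ u, κ / Fintype.card S ≤ ν.real (G ⁻¹' {u})) (u : S) :
    |(μ.prod ν).real {z | F z.1 + G z.2 = u} - 1 / Fintype.card S| ≤ (1 - κ) * δ := by
  have hcard : (Fintype.card S : ℝ) ≠ 0 := Nat.cast_ne_zero.2 Fintype.card_ne_zero
  have hsumF : ∑ v, μ.real (F ⁻¹' {u - v}) = 1 := by
    refine (Equiv.sum_comp (Equiv.subLeft u) fun v ↦ μ.real (F ⁻¹' {v})).trans ?_
    rw [sum_measureReal_preimage_singleton _ fun v _ ↦ hF (measurableSet_singleton v),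
      Finset.coe_univ, Set.preimage_univ, probReal_univ]
  have hsumG : ∑ v, ν.real (G ⁻¹' {v}) = 1 := by
    rw [sum_measureReal_preimage_singleton _ fun v _ ↦ hG (measurableSet_singleton v),
      Finset.coe_univ, Set.preimage_univ, probReal_univ]
  have hcenter : (μ.prod ν).real {z | F z.1 + G z.2 = u} - 1 / Fintype.card S =
      ∑ v, (μ.real (F ⁻¹' {u - v}) - 1 / Fintype.card S) *
        (ν.real (G ⁻¹' {v}) - κ / Fintype.card S) := by
    simp only [sub_mul, mul_sub, Finset.sum_sub_distrib, ← Finset.mul_sum, ← Finset.sum_mul,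
      ← measureReal_prod_add_eq hF hG, hsumF, hsumG, Finset.sum_const, Finset.card_univ,
      nsmul_eq_mul]
    field_simp
    ring
  rw [hcenter]
  calc _ ≤ ∑ v, δ * (ν.real (G ⁻¹' {v}) - κ / Fintype.card S) := by
        refine (Finset.abs_sum_le_sum_abs _ _).trans (Finset.sum_le_sum fun v _ ↦ ?_)
        rw [abs_mul, abs_of_nonneg (sub_nonneg.2 (hκ v))]
        exact mul_le_mul_of_nonneg_right (hδ _) (sub_nonneg.2 (hκ v))
    _ = (1 - κ) * δ := by
        rw [← Finset.mul_sum, Finset.sum_sub_distrib, hsumG, Finset.sum_const, Finset.card_univ,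
          nsmul_eq_mul, mul_div_cancel₀ _ hcard, mul_comm]

end RandomWalk

section Cocycle

variable {n h : ℕ}

/-- How far a function on `ZMod n` is from being invariant under translation by `1`. -/
noncomputable def shiftDefect (c : ZMod n → ZMod h) : ℝ :=
  (uniform (ZMod n)).real {x | c (x + 1) ≠ c x}

/-- How far a function `ZMod n → ZMod h` is from commuting with multiplication by `q`. -/
noncomputable def dilationDefect (q : ℕ) (c : ZMod n → ZMod h) : ℝ :=
  (uniform (ZMod n)).real {x | c (q * x) ≠ q * c x}

/-- The distribution of the increment of `c` along the translation by `m`, evaluated at `u`. -/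
noncomputable def incrementLaw (c : ZMod n → ZMod h) (m : ZMod n) (u : ZMod h) : ℝ :=
  (uniform (ZMod n)).real {x | c (x + m) - c x = u}

/-- The sum of a function of the residue modulo `a` and a function of the residue modulo `b`, as a
function on `ZMod (a * b)`. -/
def crtSum {a b : ℕ} (hab : a.Coprime b) (C : ZMod a → ZMod h) (c : ZMod b → ZMod h) :
    ZMod (a * b) → ZMod h :=
  fun x ↦ C (ZMod.chineseRemainder hab x).1 + c (ZMod.chineseRemainder hab x).2

variable {a b : ℕ} [NeZero a] [NeZero b] (hab : a.Coprime b) {C : ZMod a → ZMod h}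
  {c : ZMod b → ZMod h}

lemma measurePreserving_chineseRemainder :
    MeasurePreserving (ZMod.chineseRemainder hab) (uniform (ZMod (a * b)))
      ((uniform (ZMod a)).prod (uniform (ZMod b))) := by
  have : NeZero (a * b) := ⟨mul_ne_zero (NeZero.ne a) (NeZero.ne b)⟩
  exact uniform_prod (α := ZMod a) (β := ZMod b) ▸
    measurePreserving_uniform (ZMod.chineseRemainder hab).toEquiv

lemma uniform_real_le_add_of_chineseRemainder {s : Set (ZMod (a * b))} {s₁ : Set (ZMod a)}
    {s₂ : Set (ZMod b)} (hs : ∀ x ∈ s, (ZMod.chineseRemainder hab x).1 ∈ s₁ ∨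
      (ZMod.chineseRemainder hab x).2 ∈ s₂) :
    (uniform (ZMod (a * b))).real s ≤ (uniform (ZMod a)).real s₁ + (uniform (ZMod b)).real s₂ := by
  have : NeZero (a * b) := ⟨mul_ne_zero (NeZero.ne a) (NeZero.ne b)⟩
  have h₁ := measurePreserving_fst.comp (measurePreserving_chineseRemainder hab)
  have h₂ := measurePreserving_snd.comp (measurePreserving_chineseRemainder hab)
  rw [← h₁.measureReal_preimage MeasurableSet.of_discrete.nullMeasurableSet,
    ← h₂.measureReal_preimage MeasurableSet.of_discrete.nullMeasurableSet]
  exact (measureReal_mono hs).trans (measureReal_union_le _ _)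

lemma shiftDefect_crtSum_le : shiftDefect (crtSum hab C c) ≤ shiftDefect C + shiftDefect c := by
  refine uniform_real_le_add_of_chineseRemainder hab fun x hx ↦ ?_
  contrapose! hx
  simp only [Set.mem_ofPred_eq, not_not] at hx ⊢
  simp [crtSum, hx.1, hx.2]

lemma dilationDefect_crtSum_le (q : ℕ) :
    dilationDefect q (crtSum hab C c) ≤ dilationDefect q C + dilationDefect q c := by
  refine uniform_real_le_add_of_chineseRemainder hab fun x hx ↦ ?_
  contrapose! hx
  simp only [Set.mem_ofPred_eq, not_not] at hx ⊢
  simp [crtSum, hx.1, hx.2, mul_add]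

lemma abs_incrementLaw_crtSum_sub_le [NeZero h] {m : ZMod a} {m' : ZMod b} {δ κ : ℝ}
    (hδ : ∀ u, |incrementLaw C m u - 1 / h| ≤ δ) (hκ : ∀ u, κ / h ≤ incrementLaw c m' u)
    (u : ZMod h) :
    |incrementLaw (crtSum hab C c) ((ZMod.chineseRemainder hab).symm (m, m')) u - 1 / h| ≤
      (1 - κ) * δ := by
  have hlaw : incrementLaw (crtSum hab C c) ((ZMod.chineseRemainder hab).symm (m, m')) u =
      ((uniform (ZMod a)).prod (uniform (ZMod b))).real
        {z | C (z.1 + m) - C z.1 + (c (z.2 + m') - c z.2) = u} := by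
    rw [← (measurePreserving_chineseRemainder hab).measureReal_preimage
      MeasurableSet.of_discrete.nullMeasurableSet, incrementLaw]
    congr 1
    ext x
    simp [crtSum, add_sub_add_comm]
  have hwalk := abs_measureReal_prod_add_eq_sub_le (μ := uniform (ZMod a))
    (ν := uniform (ZMod b)) (F := fun x ↦ C (x + m) - C x) (G := fun y ↦ c (y + m') - c y)
    (δ := δ) (κ := κ) .of_discrete .of_discrete
  rw [ZMod.card] at hwalk
  rw [hlaw]
  exact hwalk hδ hκ u

end Cocycle

section PrimeCocycle

open Finset

variable {p h M D : ℕ} [NeZero p]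

/-- The parameter by which the steps of the random walk on `ZMod h` dominate the uniform law, when
the jumps of the staircase are `p / M` apart. -/
noncomputable def mixingRate (h M D : ℕ) : ℝ := #D.divisors * h / (4 * M)

lemma shiftDefect_staircaseSum_le {J : ℕ} (hJ : 0 < J) (hD : D.Coprime p) :
    shiftDefect (staircaseSum p h J D) ≤ (D * (D * (h + 2)) : ℕ) / p := by
  rw [shiftDefect, uniform_real_setOf, ZMod.card]
  gcongr
  exact card_filter_staircaseSum_add_one_ne_le hJ hD

lemma dilationDefect_staircaseSum_le {q L : ℕ} (hq : q.Prime) (hD0 : D ≠ 0) (hDp : D.Coprime p)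
    (hqp : q.Coprime p) (hqD : q ^ L ∣ D) :
    dilationDefect q (staircaseSum p h (p / M) D) ≤ 8 * mixingRate h M D / (L + 1) := by
  have hp : (p : ℝ) ≠ 0 := NeZero.ne _
  have hdiv : (#{w ∈ D.divisors | ¬ q ∣ w} : ℝ) ≤ #D.divisors / (L + 1) := by
    rw [le_div_iff₀' (by positivity)]
    exact_mod_cast succ_mul_card_filter_not_dvd_le hq hqD
  have hcard := card_filter_staircaseSum_natCast_mul_ne_le (h := h) (J := p / M) hD0 hq.ne_zero
    hDp hqp
  rw [dilationDefect, uniform_real_setOf, ZMod.card]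
  calc _ ≤ ((2 * #{w ∈ D.divisors | ¬ q ∣ w} * (h * (p / M)) : ℕ) : ℝ) / p := by gcongr
    _ ≤ 2 * (#D.divisors / (L + 1)) * (h * (p / M)) / p := by
        push_cast
        gcongr
        exact Nat.cast_div_le
    _ = 8 * mixingRate h M D / (L + 1) := by
        rw [mixingRate]
        field_simp
        ring

lemma exists_forall_le_incrementLaw_staircaseSum [NeZero h] (hD0 : D ≠ 0) (hDp : D.Coprime p)
    (hDh : D.Coprime h) (hM : 2 * h ^ 2 * (D * (D + 1)) = M) (hMp : M ≤ p) :
    ∃ m, ∀ u, mixingRate h M D / h ≤ incrementLaw (staircaseSum p h (p / M) D) m u := by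
  have hh := NeZero.pos h
  have hM0 : 0 < M := by rw [← hM]; positivity
  have hp0 : 0 < p := NeZero.pos p
  have hp : (p : ℝ) ≤ 2 * (p / M : ℕ) * M := by
    have hlt : p < (p / M + 1) * M := (Nat.lt_mul_div_succ p hM0).trans_eq (mul_comm _ _)
    have hJ : 0 < p / M := Nat.div_pos hMp hM0
    exact_mod_cast (by nlinarith : p ≤ 2 * (p / M) * M)
  obtain ⟨m, hm⟩ := exists_forall_le_card_filter_staircaseSum_sub_eq hD0 hDp hDh
    ((congrArg (· * (p / M)) hM).trans_le (Nat.mul_div_le p M))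
  refine ⟨m, fun u ↦ ?_⟩
  rw [incrementLaw, uniform_real_setOf, ZMod.card, mixingRate, div_div,
    div_le_div_iff₀ (by positivity) (by positivity)]
  set N := #{x | staircaseSum p h (p / M) D (x + m) - staircaseSum p h (p / M) D x = u}
  have hN : (#D.divisors * (p / M : ℕ) : ℝ) ≤ 2 * N := mod_cast hm u
  calc (#D.divisors : ℝ) * h * p ≤ #D.divisors * h * (2 * (p / M : ℕ) * M) := by gcongr
    _ = #D.divisors * (p / M : ℕ) * (2 * M * h) := by ring
    _ ≤ 2 * N * (2 * M * h) := by gcongr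
    _ = N * (4 * M * h) := by ring

lemma mixingRate_pos (hh : 0 < h) (hM : 0 < M) (hD0 : D ≠ 0) : 0 < mixingRate h M D := by
  have : 0 < #D.divisors := card_pos.2 (Nat.nonempty_divisors.2 hD0)
  unfold mixingRate
  positivity

lemma mixingRate_le_one (hM : h ^ 2 * (D * (D + 1)) ≤ M) : mixingRate h M D ≤ 1 := by
  refine div_le_one_of_le₀ ?_ (by positivity)
  have : #D.divisors * h ≤ (D * (D + 1)) * h ^ 2 := by
    gcongr
    · exact (Nat.card_divisors_le_self D).trans (Nat.le_mul_of_pos_right D D.succ_pos)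
    · exact Nat.le_self_pow two_ne_zero h
  exact_mod_cast (by lia : #D.divisors * h ≤ 4 * M)

/-- The increments dominate `κ` times the uniform law, while the dilation defect is smaller than
`κ` by the factor `8 / (L + 1)`: about `1 / κ` independent copies suffice for mixing, and the sum of
their dilation defects is small. -/
lemma exists_eventually_prime_cocycle (h : ℕ) [NeZero h] {B : Finset ℕ}
    (hB : ∀ q ∈ B, q.Prime) (hBh : ∀ q ∈ B, q.Coprime h) (L : ℕ) :
    ∃ κ : ℝ, 0 < κ ∧ κ ≤ 1 ∧ ∀ η : ℝ, 0 < η → ∀ᶠ p : ℕ in atTop, p.Prime →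
      ∃ (c : ZMod p → ZMod h) (m : ZMod p), shiftDefect c ≤ η ∧
        (∀ q ∈ B, dilationDefect q c ≤ 8 * κ / (L + 1)) ∧ ∀ u, κ / h ≤ incrementLaw c m u := by
  have hh := NeZero.pos h
  set D := ∏ q ∈ B, q ^ L
  have hD0 : D ≠ 0 := prod_ne_zero_iff.2 fun q hq ↦ pow_ne_zero L (hB q hq).ne_zero
  have hDh : D.Coprime h := Nat.Coprime.prod_left fun q hq ↦ (hBh q hq).pow_left L
  obtain ⟨M, hM⟩ : ∃ M, 2 * h ^ 2 * (D * (D + 1)) = M := ⟨_, rfl⟩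
  have hM0 : 0 < M := by rw [← hM]; positivity
  refine ⟨mixingRate h M D, mixingRate_pos hh hM0 hD0, mixingRate_le_one (by lia),
    fun η hη ↦ ?_⟩
  filter_upwards [eventually_ge_atTop M, eventually_gt_atTop D, eventually_gt_atTop (B.sup id),
    (tendsto_natCast_atTop_atTop (R := ℝ)).eventually_ge_atTop
      ((D * (D * (h + 2)) : ℕ) / η)] with p hpM hpD hpB hpη hp
  have := Fact.mk hp
  have hDp : D.Coprime p := (Nat.coprime_of_lt_prime hD0 hpD hp).symm
  obtain ⟨m, hm⟩ := exists_forall_le_incrementLaw_staircaseSum hD0 hDp hDh hM hpM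
  refine ⟨staircaseSum p h (p / M) D, m, ?_, fun q hq ↦ ?_, hm⟩
  · exact (shiftDefect_staircaseSum_le (Nat.div_pos hpM hM0) hDp).trans
      ((div_le_comm₀ hη (Nat.cast_pos.2 hp.pos)).1 hpη)
  · have hqp : q.Coprime p := (Nat.coprime_of_lt_prime (hB q hq).ne_zero
      ((le_sup (f := id) hq).trans_lt hpB) hp).symm
    exact dilationDefect_staircaseSum_le (hB q hq) hD0 hDp hqp (dvd_prod_of_mem _ hq)

end PrimeCocycle

/-! ### Combining primes -/

section Combination

open Finset

variable {P : Set ℕ} {h : ℕ} [NeZero h]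

lemma exists_crt_cocycle (hP : ∀ p ∈ P, p.Prime) (hPinf : P.Infinite) {B : Finset ℕ} {κ η τ : ℝ}
    (hc : ∀ᶠ p : ℕ in atTop, p.Prime → ∃ (c : ZMod p → ZMod h) (m : ZMod p), shiftDefect c ≤ η ∧
      (∀ q ∈ B, dilationDefect q c ≤ τ) ∧ ∀ u, κ / h ≤ incrementLaw c m u) (n : ℕ) :
    ∃ H : ℕ, n < H ∧ h.Coprime H ∧ (∀ q : ℕ, q.Prime → q ∣ H → q ∈ P) ∧
      ∃ (C : ZMod H → ZMod h) (m : ZMod H), shiftDefect C ≤ n * η ∧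
        (∀ q ∈ B, dilationDefect q C ≤ n * τ) ∧
        ∀ u, |incrementLaw C m u - 1 / h| ≤ (1 - κ) ^ n := by
  induction n with
  | zero =>
    refine ⟨1, one_pos, Nat.coprime_one_right h,
      fun q hq hq1 ↦ absurd (Nat.dvd_one.1 hq1) hq.ne_one, 0, 0, ?_, ?_, fun u ↦ ?_⟩
    · simp [shiftDefect]
    · simp [dilationDefect]
    · have hinv : (1 / h : ℝ) ≤ 1 := by simpa using Nat.cast_inv_le_one h
      rw [pow_zero, abs_sub_le_iff]
      have hlaw : incrementLaw (0 : ZMod 1 → ZMod h) 0 u ∈ Set.Icc 0 1 :=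
        ⟨measureReal_nonneg, measureReal_le_one⟩
      have hinv0 : (0 : ℝ) ≤ 1 / h := by positivity
      constructor <;> linarith [hlaw.1, hlaw.2]
  | succ n ih =>
    obtain ⟨H, hnH, hhH, hHP, C, m, hshift, hdil, hlaw⟩ := ih
    have hH0 : H ≠ 0 := by lia
    have : NeZero H := ⟨hH0⟩
    obtain ⟨p, hpP, hpc, hph, hpH⟩ := ((Nat.frequently_atTop_iff_infinite.2 hPinf).and_eventually
      (hc.and ((eventually_gt_atTop h).and (eventually_gt_atTop H)))).exists
    have hp := hP p hpP
    have : NeZero p := ⟨hp.ne_zero⟩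
    obtain ⟨c, m', hshift', hdil', hlaw'⟩ := hpc hp
    have hHp : H.Coprime p := (Nat.coprime_of_lt_prime hH0 hpH hp).symm
    have hhp : h.Coprime p := (Nat.coprime_of_lt_prime (NeZero.ne h) hph hp).symm
    refine ⟨H * p, by nlinarith [hp.two_le], hhH.mul_right hhp, fun q hq hqHp ↦ ?_,
      crtSum hHp C c, (ZMod.chineseRemainder hHp).symm (m, m'), ?_, fun q hq ↦ ?_, fun u ↦ ?_⟩
    · exact (hq.dvd_mul.1 hqHp).elim (hHP q hq) fun hqp ↦
        (Nat.prime_dvd_prime_iff_eq hq hp).1 hqp ▸ hpP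
    · rw [Nat.cast_succ, add_one_mul]
      exact (shiftDefect_crtSum_le hHp).trans (add_le_add hshift hshift')
    · rw [Nat.cast_succ, add_one_mul]
      exact (dilationDefect_crtSum_le hHp q).trans (add_le_add (hdil q hq) (hdil' q hq))
    · rw [pow_succ']
      exact abs_incrementLaw_crtSum_sub_le hHp hlaw hlaw' u

lemma one_sub_pow_le_of_one_le_mul {κ ε : ℝ} {n : ℕ} (hκ : κ ≤ 1) (hε : 0 < ε)
    (hn : 1 ≤ ε * (n * κ)) : (1 - κ) ^ n ≤ ε :=
  calc (1 - κ) ^ n ≤ Real.exp (-κ) ^ n :=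
        pow_le_pow_left₀ (sub_nonneg.2 hκ) (Real.one_sub_le_exp_neg κ) n
    _ = (Real.exp (n * κ))⁻¹ := by rw [← Real.exp_nat_mul, mul_neg, Real.exp_neg]
    _ ≤ ε := inv_le_of_inv_le₀ hε <| by
        calc ε⁻¹ ≤ n * κ := (inv_le_iff_one_le_mul₀' hε).2 hn
          _ ≤ Real.exp (n * κ) := by linarith [Real.add_one_le_exp (n * κ)]

lemma exists_mixing_cocycle (hP : ∀ p ∈ P, p.Prime) (hPinf : P.Infinite) {B : Finset ℕ}
    (hB : ∀ q ∈ B, q.Prime) (hBh : ∀ q ∈ B, q.Coprime h) {ε : ℝ} (hε : 0 < ε) :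
    ∃ H : ℕ, 1 < H ∧ h.Coprime H ∧ (∀ q : ℕ, q.Prime → q ∣ H → q ∈ P) ∧
      ∃ (C : ZMod H → ZMod h) (m : ZMod H), shiftDefect C ≤ ε ∧
        (∀ q ∈ B, dilationDefect q C ≤ ε) ∧ ∀ u, |incrementLaw C m u - 1 / h| ≤ ε := by
  obtain ⟨L, hL⟩ := exists_nat_ge (8 * (1 / ε + 1) / ε)
  obtain ⟨κ, hκ0, hκ1, hc⟩ := exists_eventually_prime_cocycle h hB hBh L
  set n := ⌈1 / (ε * κ)⌉₊
  have hn : 0 < n := Nat.ceil_pos.2 (by positivity)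
  obtain ⟨H, hnH, hhH, hHP, C, m, hshift, hdil, hlaw⟩ :=
    exists_crt_cocycle hP hPinf (hc (ε / n) (by positivity)) n
  refine ⟨H, by lia, hhH, hHP, C, m, hshift.trans_eq (by field_simp),
    fun q hq ↦ (hdil q hq).trans ?_,
    fun u ↦ (hlaw u).trans (one_sub_pow_le_of_one_le_mul hκ1 hε ?_)⟩
  · have hnκ : n * κ ≤ 1 / ε + 1 :=
      calc n * κ ≤ (1 / (ε * κ) + 1) * κ := by
            gcongr
            exact (Nat.ceil_lt_add_one (by positivity)).le
        _ = 1 / ε + κ := by field_simp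
        _ ≤ 1 / ε + 1 := by gcongr
    calc n * (8 * κ / (L + 1)) = 8 * (n * κ) / (L + 1) := by ring
      _ ≤ 8 * (1 / ε + 1) / (L + 1) := by gcongr
      _ ≤ ε := by
        rw [div_le_iff₀ (by positivity)]
        rw [div_le_iff₀' hε] at hL
        linarith
  · calc 1 = ε * (1 / (ε * κ) * κ) := by field_simp
      _ ≤ ε * (n * κ) := by gcongr; exact Nat.le_ceil _

end Combination

section TowerStep

variable {h H : ℕ}

/-- The chinese remainder bijection followed by the shear `(x, y) ↦ (x + C y, y)`. -/
def skewRemainder (hhH : h.Coprime H) (C : ZMod H → ZMod h) : ZMod (h * H) ≃ ZMod h × ZMod H where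
  toFun x := ((ZMod.chineseRemainder hhH x).1 + C (ZMod.chineseRemainder hhH x).2,
    (ZMod.chineseRemainder hhH x).2)
  invFun z := (ZMod.chineseRemainder hhH).symm (z.1 - C z.2, z.2)
  left_inv x := by simp
  right_inv z := by simp

variable [NeZero h] [NeZero H] (hhH : h.Coprime H) (C : ZMod H → ZMod h)

lemma measurePreserving_skewRemainder :
    MeasurePreserving (skewRemainder hhH C) (uniform (ZMod (h * H)))
      ((uniform (ZMod h)).prod (uniform (ZMod H))) := by
  have : NeZero (h * H) := ⟨mul_ne_zero (NeZero.ne h) (NeZero.ne H)⟩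
  exact uniform_prod (α := ZMod h) (β := ZMod H) ▸ measurePreserving_uniform (skewRemainder hhH C)

lemma uniform_real_skewRemainder_mem (s : Set (ZMod H)) :
    (uniform (ZMod (h * H))).real {x | (skewRemainder hhH C x).2 ∈ s} =
      (uniform (ZMod H)).real s :=
  (measurePreserving_snd.comp (measurePreserving_skewRemainder hhH C)).measureReal_preimage
    MeasurableSet.of_discrete.nullMeasurableSet

lemma uniform_real_skewRemainder_add_one_ne :
    (uniform (ZMod (h * H))).real
      {x | (skewRemainder hhH C (x + 1)).1 ≠ (skewRemainder hhH C x).1 + 1} = shiftDefect C := by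
  rw [shiftDefect, ← uniform_real_skewRemainder_mem hhH C]
  congr 1
  ext x
  simp [skewRemainder, add_right_comm]

lemma uniform_real_skewRemainder_natCast_mul_ne (q : ℕ) :
    (uniform (ZMod (h * H))).real
      {x | (skewRemainder hhH C (q * x)).1 ≠ q * (skewRemainder hhH C x).1} =
      dilationDefect q C := by
  rw [dilationDefect, ← uniform_real_skewRemainder_mem hhH C]
  congr 1
  ext x
  simp [skewRemainder, mul_add]

lemma uniform_real_skewRemainder_eq_and (m : ℕ) (a b : ZMod h) :
    (uniform (ZMod (h * H))).real
      {x | (skewRemainder hhH C x).1 = a ∧ (skewRemainder hhH C (x + m)).1 = b} =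
      1 / h * incrementLaw C m (b - a - m) := by
  have hset : {x | (skewRemainder hhH C x).1 = a ∧ (skewRemainder hhH C (x + m)).1 = b} =
      skewRemainder hhH C ⁻¹' ({a} ×ˢ {y | C (y + m) - C y = b - a - m}) := by
    ext x
    simp only [skewRemainder, Equiv.coe_fn_mk, map_add, map_natCast, Prod.fst_add, Prod.snd_add,
      Prod.fst_natCast, Prod.snd_natCast, Set.mem_ofPred_eq, Set.mem_preimage, Set.mem_prod,
      Set.mem_singleton_iff]
    refine and_congr_right fun hx ↦ ?_
    rw [← hx]
    constructor <;> intro h <;> linear_combination h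
  rw [hset, (measurePreserving_skewRemainder hhH C).measureReal_preimage
    MeasurableSet.of_discrete.nullMeasurableSet, measureReal_prod_prod, measureReal_def,
    uniform_singleton, ZMod.card, ENNReal.toReal_inv, ENNReal.toReal_natCast, one_div, incrementLaw]

/-- The first component of a bijection `ZMod h' ≃ ZMod h × Fin N` approximately intertwines the
translations by `1` and the multiplications by the primes `q ≤ k` outside `P`, and approximately
decouples from itself under the translation by `m`. -/
structure IsTowerStep (P : Set ℕ) (k : ℕ) {h h' N : ℕ} (e : ZMod h' ≃ ZMod h × Fin N) (m : ℕ)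
    (ε : ℝ) : Prop where
  two_le : 2 ≤ N
  lt : m < h'
  add_one : (uniform (ZMod h')).real {x | (e (x + 1)).1 ≠ (e x).1 + 1} ≤ ε
  natCast_mul : ∀ q : ℕ, q.Prime → q ∉ P → q ≤ k →
    (uniform (ZMod h')).real {x | (e (q * x)).1 ≠ q * (e x).1} ≤ ε
  add_natCast : ∀ a b,
    |(uniform (ZMod h')).real {x | (e x).1 = a ∧ (e (x + m)).1 = b} - 1 / (h : ℝ) ^ 2| ≤ ε

lemma exists_isTowerStep {P : Set ℕ} (hP : ∀ p ∈ P, p.Prime) (hPinf : P.Infinite) (h : ℕ)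
    (hh : h ≠ 0) (hhP : ∀ q : ℕ, q.Prime → q ∣ h → q ∈ P) (k : ℕ) {ε : ℝ} (hε : 0 < ε) :
    ∃ h' : ℕ, h' ≠ 0 ∧ (∀ q : ℕ, q.Prime → q ∣ h' → q ∈ P) ∧
      ∃ (N : ℕ) (e : ZMod h' ≃ ZMod h × Fin N) (m : ℕ), IsTowerStep P k e m ε := by
  classical
  have : NeZero h := ⟨hh⟩
  obtain ⟨H, hH, hhH, hHP, C, m, hshift, hdil, hlaw⟩ := exists_mixing_cocycle (h := h) hP hPinf
    (B := {q ∈ Finset.range (k + 1) | q.Prime ∧ q ∉ P}) (by simp +contextual)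
    (fun q hq ↦ by
      obtain ⟨-, hq, hqP⟩ := Finset.mem_filter.1 hq
      exact hq.coprime_iff_not_dvd.2 fun hqh ↦ hqP (hhP q hq hqh)) hε
  have hH0 : H ≠ 0 := by lia
  have : NeZero H := ⟨hH0⟩
  refine ⟨h * H, mul_ne_zero hh hH0, fun q hq hqH ↦ (hq.dvd_mul.1 hqH).elim (hhP q hq) (hHP q hq),
    H, (skewRemainder hhH C).trans ((Equiv.refl _).prodCongr (ZMod.finEquiv H).symm.toEquiv),
    m.val, hH, m.val_lt.trans_le (Nat.le_mul_of_pos_left H (NeZero.pos h)), ?_,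
    fun q hq hqP hqk ↦ ?_, fun a b ↦ ?_⟩
  · exact (uniform_real_skewRemainder_add_one_ne hhH C).trans_le hshift
  · exact (uniform_real_skewRemainder_natCast_mul_ne hhH C q).trans_le (hdil q (by grind))
  · refine le_trans ?_ (hlaw (b - a - (m.val : ℕ)))
    refine (congrArg (|· - 1 / (h : ℝ) ^ 2|)
      (uniform_real_skewRemainder_eq_and hhH C m.val a b)).trans_le ?_
    have hinv : (1 / h : ℝ) ≤ 1 := by simpa using Nat.cast_inv_le_one h
    rw [ZMod.natCast_zmod_val, sq, ← one_div_mul_one_div, ← mul_sub, abs_mul,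
      abs_of_nonneg (by positivity : (0 : ℝ) ≤ 1 / h)]
    exact mul_le_of_le_one_left (abs_nonneg _) hinv

end TowerStep

/-! ### Cyclic towers -/

/-- A sequence of finite cyclic groups `ZMod (height k)`, starting from the trivial one, in which
each group is identified, as a set, with a product of its predecessor and a further digit.  The
first coordinate of `equiv k` need not be a homomorphism. -/
structure CyclicTower where
  height : ℕ → ℕ
  width : ℕ → ℕ
  height_zero : height 0 = 1
  two_le_width : ∀ k, 2 ≤ width k
  equiv : ∀ k, ZMod (height (k + 1)) ≃ ZMod (height k) × Fin (width k)

namespace CyclicTower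

variable (T : CyclicTower) {k l : ℕ}

lemma height_succ (k : ℕ) : T.height (k + 1) = T.height k * T.width k := by
  simpa [Nat.card_prod] using Nat.card_congr (T.equiv k)

lemma two_pow_le_height (k : ℕ) : 2 ^ k ≤ T.height k := by
  induction k with
  | zero => exact T.height_zero.ge
  | succ k ih => exact T.height_succ k ▸ pow_succ 2 k ▸ Nat.mul_le_mul ih (T.two_le_width k)

lemma height_pos (k : ℕ) : 0 < T.height k := (Nat.two_pow_pos k).trans_le (T.two_pow_le_height k)

lemma monotone_height : Monotone T.height := monotone_nat_of_le_succ fun k ↦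
  T.height_succ k ▸ Nat.le_mul_of_pos_right _ (two_pos.trans_le (T.two_le_width k))

instance (k : ℕ) : NeZero (T.height k) := ⟨(T.height_pos k).ne'⟩

instance (k : ℕ) : NeZero (T.width k) := ⟨(two_pos.trans_le (T.two_le_width k)).ne'⟩

/-- The map from each level of the tower to the preceding one. -/
def reduce (k : ℕ) (z : ZMod (T.height (k + 1))) : ZMod (T.height k) := (T.equiv k z).1

/-- The error allowed at level `k`: small relative to the frequency `1 / height k ^ 2` of a pair of
levels, and summable. -/
noncomputable def tolerance (k : ℕ) : ℝ := (1 / 2) ^ (k + 1) / (T.height k : ℝ) ^ 2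

lemma exists_forall_isTowerStep {P : Set ℕ} (hP : ∀ p ∈ P, p.Prime) (hPinf : P.Infinite) :
    ∃ (T : CyclicTower) (m : ℕ → ℕ), (∀ k q, q.Prime → q ∣ T.height k → q ∈ P) ∧
      ∀ k, IsTowerStep P k (T.equiv k) (m k) (T.tolerance k) := by
  let Height := {h : ℕ // h ≠ 0 ∧ ∀ q, q.Prime → q ∣ h → q ∈ P}
  have hstep (k : ℕ) (h : Height) : ∃ (h' : Height) (N : ℕ) (e : ZMod h' ≃ ZMod h × Fin N) (m : ℕ),
      IsTowerStep P k e m ((1 / 2) ^ (k + 1) / (h : ℝ) ^ 2) := by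
    have hpos : (0 : ℝ) < h := Nat.cast_pos.2 (Nat.pos_of_ne_zero h.2.1)
    obtain ⟨h', h'0, h'P, hstep⟩ := exists_isTowerStep hP hPinf h h.2.1 h.2.2 k
      (ε := (1 / 2) ^ (k + 1) / (h : ℝ) ^ 2) (by positivity)
    exact ⟨⟨h', h'0, h'P⟩, hstep⟩
  choose next N e m hm using hstep
  let height (k : ℕ) : Height := Nat.rec
    ⟨1, one_ne_zero, fun q hq hq1 ↦ absurd (Nat.dvd_one.1 hq1) hq.ne_one⟩ (fun k h ↦ next k h) k
  let T : CyclicTower := {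
    height := fun k ↦ (height k).1
    width := fun k ↦ N k (height k)
    height_zero := rfl
    two_le_width := fun k ↦ (hm k (height k)).two_le
    equiv := fun k ↦ e k (height k) }
  exact ⟨T, fun k ↦ m k (height k), fun k ↦ (height k).2.2, fun k ↦ hm k (height k)⟩

end CyclicTower

/-! ### The space of digits -/

namespace CyclicTower

variable (T : CyclicTower) {k l : ℕ}

/-- The space of all digit sequences of the tower.  It plays the role of the inverse limit of the
levels, although the projections to them are compatible only with the maps `reduce`, which need not
be homomorphisms. -/
abbrev Space : Type := ∀ k, Fin (T.width k)

/-- The measure making the digits independent and uniformly distributed. -/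
noncomputable def measure : Measure T.Space := Measure.infinitePi fun k ↦ uniform (Fin (T.width k))

instance : IsProbabilityMeasure T.measure := by
  unfold measure
  infer_instance

/-- The level-`k` coordinate of a point, which encodes its first `k` digits. -/
def proj : ∀ k, T.Space → ZMod (T.height k)
  | 0, _ => 0
  | k + 1, x => (T.equiv k).symm (proj k x, x k)

variable {T}

lemma equiv_proj_succ (k : ℕ) (x : T.Space) : T.equiv k (T.proj (k + 1) x) = (T.proj k x, x k) :=
  (T.equiv k).apply_symm_apply _

lemma reduce_proj (k : ℕ) (x : T.Space) : T.reduce k (T.proj (k + 1) x) = T.proj k x :=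
  congr_arg Prod.fst (equiv_proj_succ k x)

lemma proj_eq_proj_iff {x y : T.Space} : T.proj k x = T.proj k y ↔ ∀ i < k, x i = y i := by
  induction k with
  | zero => simp [proj]
  | succ k ih =>
    rw [← (T.equiv k).apply_eq_iff_eq, equiv_proj_succ, equiv_proj_succ, Prod.mk.injEq, ih,
      Nat.forall_lt_succ_right]

lemma proj_eq_of_le {x y : T.Space} (hkl : k ≤ l) (h : T.proj l x = T.proj l y) :
    T.proj k x = T.proj k y :=
  proj_eq_proj_iff.2 fun i hi ↦ proj_eq_proj_iff.1 h i (hi.trans_le hkl)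

lemma eq_of_frequently_proj_eq {x y : T.Space} (h : ∃ᶠ k in atTop, T.proj k x = T.proj k y) :
    x = y := by
  funext i
  obtain ⟨k, hk, hxy⟩ := frequently_atTop.1 h (i + 1)
  exact proj_eq_proj_iff.1 hxy i hk

lemma proj_surjective (k : ℕ) : Function.Surjective (T.proj k) := by
  induction k with
  | zero =>
    have : Subsingleton (ZMod (T.height 0)) := by rw [T.height_zero]; infer_instance
    exact Function.surjective_to_subsingleton _
  | succ k ih =>
    intro a
    obtain ⟨x, hx⟩ := ih (T.reduce k a)
    refine ⟨Function.update x k (T.equiv k a).2, (T.equiv k).injective ?_⟩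
    have hproj : T.proj k (Function.update x k (T.equiv k a).2) = T.proj k x :=
      proj_eq_proj_iff.2 fun i hi ↦ Function.update_of_ne hi.ne _ _
    rw [equiv_proj_succ, hproj, hx, Function.update_self, reduce]

lemma exists_forall_proj_eq {K : ℕ} {z : ∀ k, ZMod (T.height k)}
    (hz : ∀ k ≥ K, T.reduce k (z (k + 1)) = z k) : ∃ y, ∀ k ≥ K, T.proj k y = z k := by
  obtain ⟨x, hx⟩ := proj_surjective K (z K)
  refine ⟨fun i ↦ if i < K then x i else (T.equiv i (z (i + 1))).2, fun k hk ↦ ?_⟩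
  induction k, hk using Nat.le_induction with
  | base => exact hx ▸ proj_eq_proj_iff.2 fun i hi ↦ if_pos hi
  | succ k hk ih =>
    rw [← (T.equiv k).apply_eq_iff_eq, equiv_proj_succ, ih, if_neg hk.not_gt, ← hz k hk, reduce]

section Measure

lemma measurable_proj (k : ℕ) : Measurable (T.proj k) := by
  induction k with
  | zero => exact measurable_const
  | succ k ih =>
    exact (Measurable.of_discrete (f := (T.equiv k).symm)).comp (ih.prodMk (measurable_pi_apply k))

lemma measurableSet_setOf_proj (k : ℕ) (s : ZMod (T.height k) → Prop) :
    MeasurableSet {x | s (T.proj k x)} :=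
  measurable_proj k (MeasurableSet.of_discrete (s := {z | s z}))

lemma prod_width (k : ℕ) : ∏ i ∈ Finset.range k, T.width i = T.height k := by
  induction k with
  | zero => exact T.height_zero.symm
  | succ k ih => rw [Finset.prod_range_succ, ih, height_succ]

lemma measure_setOf_proj_eq (k : ℕ) (a : ZMod (T.height k)) :
    T.measure {x | T.proj k x = a} = (T.height k : ℝ≥0∞)⁻¹ := by
  obtain ⟨y, rfl⟩ := proj_surjective k a
  have hpi : {x | T.proj k x = T.proj k y} = Set.pi (Finset.range k) fun i ↦ {y i} := by
    ext x
    simp [proj_eq_proj_iff, Set.mem_pi]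
  rw [hpi, measure, Measure.infinitePi_pi _ fun i _ ↦ measurableSet_singleton _,
    ← T.prod_width k, Nat.cast_prod, ENNReal.prod_inv_distrib fun _ _ _ _ _ ↦
      .inr (ENNReal.natCast_ne_top _)]
  simp only [uniform_singleton, Fintype.card_fin]

lemma measurePreserving_proj (k : ℕ) :
    MeasurePreserving (T.proj k) T.measure (uniform (ZMod (T.height k))) := by
  refine ⟨measurable_proj k, Measure.ext_of_singleton fun a ↦ ?_⟩
  rw [Measure.map_apply (measurable_proj k) (measurableSet_singleton a), uniform_singleton,
    ZMod.card]
  exact measure_setOf_proj_eq k a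

lemma measureReal_setOf_proj (k : ℕ) (s : ZMod (T.height k) → Prop) :
    T.measure.real {x | s (T.proj k x)} = (uniform (ZMod (T.height k))).real {z | s z} :=
  (measurePreserving_proj k).measureReal_preimage MeasurableSet.of_discrete.nullMeasurableSet

variable (T) in
/-- The algebra of sets determined by finitely many digits. -/
def cylinders : Set (Set T.Space) := {A | ∃ k, ∃ s : Set (ZMod (T.height k)), T.proj k ⁻¹' s = A}

lemma exists_preimage_proj_eq_of_le (hkl : k ≤ l) (s : Set (ZMod (T.height k))) :
    ∃ t : Set (ZMod (T.height l)), T.proj l ⁻¹' t = T.proj k ⁻¹' s := by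
  refine ⟨T.proj l '' (T.proj k ⁻¹' s), Set.Subset.antisymm ?_ (Set.subset_preimage_image _ _)⟩
  rintro x ⟨y, hy, hyx⟩
  exact Set.mem_preimage.2 (proj_eq_of_le hkl hyx ▸ hy)

lemma isSetAlgebra_cylinders : IsSetAlgebra T.cylinders where
  empty_mem := ⟨0, ∅, rfl⟩
  compl_mem := by
    rintro _ ⟨k, s, rfl⟩
    exact ⟨k, sᶜ, rfl⟩
  union_mem := by
    rintro _ _ ⟨k, s, rfl⟩ ⟨l, t, rfl⟩
    obtain ⟨s', hs'⟩ := exists_preimage_proj_eq_of_le (le_max_left k l) s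
    obtain ⟨t', ht'⟩ := exists_preimage_proj_eq_of_le (le_max_right k l) t
    exact ⟨max k l, s' ∪ t', by rw [← hs', ← ht', Set.preimage_union]⟩

lemma generateFrom_cylinders :
    (inferInstance : MeasurableSpace T.Space) = MeasurableSpace.generateFrom T.cylinders := by
  refine le_antisymm (iSup_le fun i ↦ ?_) (MeasurableSpace.generateFrom_le ?_)
  · rintro _ ⟨s, -, rfl⟩
    refine MeasurableSpace.measurableSet_generateFrom ⟨i + 1, {z | (T.equiv i z).2 ∈ s}, ?_⟩
    ext x
    simp [equiv_proj_succ]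
  · rintro _ ⟨k, s, rfl⟩
    exact measurableSet_setOf_proj k (· ∈ s)

lemma eventually_exists_measure_symmDiff_lt {A : Set T.Space} (hA : MeasurableSet A) {ε : ℝ≥0∞}
    (hε : 0 < ε) : ∀ᶠ k in atTop, ∃ s, T.measure (symmDiff A (T.proj k ⁻¹' s)) < ε := by
  obtain ⟨r, hr0, hrε⟩ := ENNReal.lt_iff_exists_nnreal_btwn.1 hε
  obtain ⟨_, ⟨K, s, rfl⟩, hs⟩ := (Measure.MeasureDense.of_generateFrom_isSetAlgebra_finite T.measure
    isSetAlgebra_cylinders generateFrom_cylinders).approx A hA (measure_ne_top _ _) r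
    (by exact_mod_cast hr0)
  filter_upwards [eventually_ge_atTop K] with k hk
  obtain ⟨t, ht⟩ := exists_preimage_proj_eq_of_le hk s
  exact ⟨t, ht ▸ hs.trans (ENNReal.ofReal_coe_nnreal.symm ▸ hrε)⟩

instance : NullSingletonClass T.measure := by
  refine ⟨fun x ↦ le_antisymm (ge_of_tendsto'
    (ENNReal.tendsto_pow_atTop_nhds_zero_of_lt_one (r := 2⁻¹) (by simp)) fun k ↦ ?_) bot_le⟩
  calc T.measure {x} ≤ T.measure {y | T.proj k y = T.proj k x} :=
        measure_mono (Set.singleton_subset_iff.2 rfl)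
    _ = (T.height k : ℝ≥0∞)⁻¹ := measure_setOf_proj_eq k _
    _ ≤ 2⁻¹ ^ k := by
        rw [← ENNReal.inv_pow, ENNReal.inv_le_inv]
        exact_mod_cast T.two_pow_le_height k

end Measure

end CyclicTower

/-! ### Limits of level permutations -/

namespace CyclicTower

variable (T : CyclicTower)

/-- A permutation of every level of the tower, without any compatibility between them. -/
abbrev LevelPerm : Type := ∀ k, Equiv.Perm (ZMod (T.height k))

variable {T} {σ τ : T.LevelPerm} {x y z : T.Space} {k l : ℕ}

/-- The proportion of level `k + 1` on which the permutations of levels `k` and `k + 1` fail to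
commute with the map `reduce`. -/
noncomputable def defect (σ : T.LevelPerm) (k : ℕ) : ℝ :=
  (uniform (ZMod (T.height (k + 1)))).real {z | T.reduce k (σ (k + 1) z) ≠ σ k (T.reduce k z)}

lemma defect_nonneg (σ : T.LevelPerm) (k : ℕ) : 0 ≤ defect σ k := measureReal_nonneg

lemma defect_one (k : ℕ) : defect (1 : T.LevelPerm) k = 0 := by
  simp [defect]

lemma defect_mul_le (σ τ : T.LevelPerm) (k : ℕ) : defect (σ * τ) k ≤ defect σ k + defect τ k := by
  rw [add_comm]
  unfold defect
  rw [← (measurePreserving_uniform (τ (k + 1))).measureReal_preimage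
    (s := {z | T.reduce k (σ (k + 1) z) ≠ _}) MeasurableSet.of_discrete.nullMeasurableSet]
  refine (measureReal_mono fun z hz ↦ ?_).trans (measureReal_union_le _ _)
  refine or_iff_not_imp_left.2 fun hτ hσ ↦ hz (hσ.trans ?_)
  exact congr_arg (σ k) (not_not.1 hτ)

lemma defect_inv (σ : T.LevelPerm) (k : ℕ) : defect σ⁻¹ k = defect σ k := by
  unfold defect
  rw [← (measurePreserving_uniform (σ (k + 1))).measureReal_preimage
    MeasurableSet.of_discrete.nullMeasurableSet]
  congr 1
  ext z
  simp [Equiv.eq_symm_apply, eq_comm]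

variable (T) in
/-- The group of level permutations with summable defects. -/
def almostCompatible : Subgroup T.LevelPerm where
  carrier := {σ | Summable (defect σ)}
  one_mem' := summable_zero.congr fun k ↦ (defect_one k).symm
  mul_mem' {σ τ} hσ hτ :=
    Summable.of_nonneg_of_le (defect_nonneg _) (defect_mul_le σ τ) (Summable.add hσ hτ)
  inv_mem' {σ} hσ := Summable.congr hσ fun k ↦ (defect_inv σ k).symm

/-- The relation that the image of `x` under the level permutations converges to `y`. -/
def IsLimitImage (σ : T.LevelPerm) (x y : T.Space) : Prop :=
  ∀ᶠ k in atTop, T.proj k y = σ k (T.proj k x)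

lemma IsLimitImage.unique (hy : IsLimitImage σ x y) (hz : IsLimitImage σ x z) : y = z :=
  eq_of_frequently_proj_eq ((hy.and hz).mono fun _ h ↦ h.1.trans h.2.symm).frequently

lemma IsLimitImage.mul (hy : IsLimitImage σ x y) (hz : IsLimitImage τ y z) :
    IsLimitImage (τ * σ) x z := by
  filter_upwards [hy, hz] with k hyk hzk
  rw [hzk, hyk, Pi.mul_apply, Equiv.Perm.mul_apply]

lemma IsLimitImage.inv (h : IsLimitImage σ x y) : IsLimitImage σ⁻¹ y x := by
  filter_upwards [h] with k hk
  rw [hk, Pi.inv_apply, Equiv.Perm.inv_def, Equiv.symm_apply_apply]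

lemma exists_isLimitImage_iff : (∃ y, IsLimitImage σ x y) ↔
    ∀ᶠ k in atTop, T.reduce k (σ (k + 1) (T.proj (k + 1) x)) = σ k (T.proj k x) := by
  refine ⟨fun ⟨y, hy⟩ ↦ ?_, fun h ↦ ?_⟩
  · filter_upwards [hy, (tendsto_add_atTop_nat 1).eventually hy] with k hk hk'
    rw [← hk', reduce_proj, hk]
  · obtain ⟨K, hK⟩ := eventually_atTop.1 h
    obtain ⟨y, hy⟩ := exists_forall_proj_eq (z := fun k ↦ σ k (T.proj k x)) hK
    exact ⟨y, eventually_atTop.2 ⟨K, hy⟩⟩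

/-- The points at which all powers of the level permutations converge. -/
def convergenceSet (σ : T.LevelPerm) : Set T.Space := {x | ∀ n : ℤ, ∃ y, IsLimitImage (σ ^ n) x y}

lemma convergenceSet_inv (σ : T.LevelPerm) : convergenceSet σ⁻¹ = convergenceSet σ := by
  ext x
  refine (Equiv.neg ℤ).forall_congr fun {n} ↦ ?_
  rw [inv_zpow', Equiv.neg_apply]

lemma IsLimitImage.mem_convergenceSet (h : IsLimitImage σ x y) (hx : x ∈ convergenceSet σ) :
    y ∈ convergenceSet σ := fun n ↦ by
  obtain ⟨z, hz⟩ := hx (n + 1)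
  have hyz := h.inv.mul hz
  rw [zpow_add_one, mul_inv_cancel_right] at hyz
  exact ⟨z, hyz⟩

lemma measurableSet_convergenceSet (σ : T.LevelPerm) : MeasurableSet (convergenceSet σ) := by
  simp only [convergenceSet, Set.ofPred_forall, exists_isLimitImage_iff]
  refine .iInter fun n ↦ ?_
  convert MeasurableSet.measurableSet_liminf fun k ↦ measurableSet_setOf_proj (k + 1) fun z ↦
    T.reduce k ((σ ^ n) (k + 1) z) = (σ ^ n) k (T.reduce k z) using 1
  ext x
  simp only [mem_liminf_iff_eventually_mem, Set.mem_ofPred_eq, reduce_proj]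

lemma measureReal_reduce_proj_ne (σ : T.LevelPerm) (k : ℕ) :
    T.measure.real {x | T.reduce k (σ (k + 1) (T.proj (k + 1) x)) ≠ σ k (T.proj k x)} =
      defect σ k := by
  rw [defect, ← measureReal_setOf_proj]
  simp only [reduce_proj]

lemma measure_reduce_proj_ne (σ : T.LevelPerm) (k : ℕ) :
    T.measure {x | T.reduce k (σ (k + 1) (T.proj (k + 1) x)) ≠ σ k (T.proj k x)} =
      ENNReal.ofReal (defect σ k) := by
  rw [← measureReal_reduce_proj_ne, ofReal_measureReal]

lemma ae_mem_convergenceSet (hσ : σ ∈ T.almostCompatible) :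
    ∀ᵐ x ∂T.measure, x ∈ convergenceSet σ := by
  refine ae_all_iff.2 fun n ↦ ?_
  have hn : Summable (defect (σ ^ n)) := T.almostCompatible.zpow_mem hσ n
  have hsum : ∑' k, T.measure {x | T.reduce k ((σ ^ n) (k + 1) (T.proj (k + 1) x)) ≠
      (σ ^ n) k (T.proj k x)} ≠ ∞ := by
    simp only [measure_reduce_proj_ne, ← ENNReal.ofReal_tsum_of_nonneg (defect_nonneg _) hn]
    exact ENNReal.ofReal_ne_top
  filter_upwards [ae_eventually_notMem hsum] with x hx
  exact exists_isLimitImage_iff.2 (hx.mono fun k hk ↦ not_not.1 hk)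

open Classical in
/-- The pointwise limit of the level permutations, extended by the identity outside their
convergence set. -/
noncomputable def limitMap (σ : T.LevelPerm) (x : T.Space) : T.Space :=
  if hx : x ∈ convergenceSet σ then (hx 1).choose else x

lemma isLimitImage_limitMap (hx : x ∈ convergenceSet σ) : IsLimitImage σ x (limitMap σ x) := by
  rw [limitMap, dif_pos hx]
  convert (hx 1).choose_spec using 1
  exact (zpow_one σ).symm

lemma limitMap_of_notMem (hx : x ∉ convergenceSet σ) : limitMap σ x = x := dif_neg hx

lemma leftInverse_limitMap_inv (σ : T.LevelPerm) :
    Function.LeftInverse (limitMap σ⁻¹) (limitMap σ) := fun x ↦ by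
  by_cases hx : x ∈ convergenceSet σ
  · have hlim := isLimitImage_limitMap hx
    refine (isLimitImage_limitMap ?_).unique hlim.inv
    exact convergenceSet_inv σ ▸ hlim.mem_convergenceSet hx
  · rw [limitMap_of_notMem hx, limitMap_of_notMem (by rwa [convergenceSet_inv])]

lemma measurable_limitMap (σ : T.LevelPerm) : Measurable (limitMap σ) := by
  classical
  let approx (l : ℕ) : T.Space → T.Space := (convergenceSet σ).piecewise
    (fun x ↦ Function.surjInv (proj_surjective l) (σ l (T.proj l x))) id
  have happrox (l : ℕ) : Measurable (approx l) := by
    refine .piecewise (measurableSet_convergenceSet σ) ?_ measurable_id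
    exact (Measurable.of_discrete (f := fun z ↦
      Function.surjInv (proj_surjective l) (σ l z))).comp (measurable_proj l)
  refine measurable_of_tendsto_metrizable happrox (tendsto_pi_nhds.2 fun x ↦ ?_)
  by_cases hx : x ∈ convergenceSet σ
  · refine tendsto_pi_nhds.2 fun i ↦ tendsto_const_nhds.congr' ?_
    filter_upwards [isLimitImage_limitMap hx, eventually_gt_atTop i] with l hl hil
    have happrox_x : approx l x = Function.surjInv (proj_surjective l) (σ l (T.proj l x)) :=
      Set.piecewise_eq_of_mem _ _ _ hx
    refine proj_eq_proj_iff.1 ?_ i hil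
    rw [happrox_x, Function.surjInv_eq (proj_surjective l), hl]
  · simp only [approx, Set.piecewise_eq_of_notMem _ _ _ hx, limitMap_of_notMem hx, id]
    exact tendsto_const_nhds

/-- The automorphism of the space of digits induced by a sequence of level permutations. -/
noncomputable def limitEquiv (σ : T.LevelPerm) : T.Space ≃ᵐ T.Space where
  toFun := limitMap σ
  invFun := limitMap σ⁻¹
  left_inv := leftInverse_limitMap_inv σ
  right_inv x := by simpa only [inv_inv] using leftInverse_limitMap_inv σ⁻¹ x
  measurable_toFun := measurable_limitMap σ
  measurable_invFun := measurable_limitMap σ⁻¹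

lemma ae_isLimitImage_limitEquiv (hσ : σ ∈ T.almostCompatible) :
    ∀ᵐ x ∂T.measure, IsLimitImage σ x (limitEquiv σ x) :=
  (ae_mem_convergenceSet hσ).mono fun _ ↦ isLimitImage_limitMap

lemma IsLimitImage.proj_eq (h : IsLimitImage σ x y)
    (hl : ∀ j ≥ l, T.reduce j (σ (j + 1) (T.proj (j + 1) x)) = σ j (T.proj j x)) :
    T.proj l y = σ l (T.proj l x) := by
  obtain ⟨K, hK⟩ := eventually_atTop.1 h
  refine Nat.decreasingInduction' (P := fun j ↦ T.proj j y = σ j (T.proj j x))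
    (fun j _ hj hyj ↦ ?_) (le_max_right K l) (hK _ (le_max_left K l))
  rw [← reduce_proj, hyj, hl j hj]

lemma measureReal_proj_limitEquiv_ne_le (hσ : σ ∈ T.almostCompatible) (l : ℕ) :
    T.measure.real {x | T.proj l (limitEquiv σ x) ≠ σ l (T.proj l x)} ≤
      ∑' j, defect σ (j + l) := by
  have hcover : ∀ᵐ x ∂T.measure, T.proj l (limitEquiv σ x) ≠ σ l (T.proj l x) →
      x ∈ ⋃ j, {x | T.reduce (j + l) (σ (j + l + 1) (T.proj (j + l + 1) x)) ≠
        σ (j + l) (T.proj (j + l) x)} := by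
    filter_upwards [ae_isLimitImage_limitEquiv hσ] with x hx
    contrapose!
    simp only [Set.mem_iUnion, Set.mem_ofPred_eq, not_exists, not_not]
    exact fun hj ↦ hx.proj_eq fun j hlj ↦ Nat.sub_add_cancel hlj ▸ hj (j - l)
  refine ENNReal.toReal_le_of_le_ofReal (tsum_nonneg fun _ ↦ defect_nonneg _ _) ?_
  refine (measure_mono_ae hcover).trans ((measure_iUnion_le _).trans_eq ?_)
  simp only [measure_reduce_proj_ne]
  exact (ENNReal.ofReal_tsum_of_nonneg (fun _ ↦ defect_nonneg _ _)
    ((summable_nat_add_iff l).2 hσ)).symm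

lemma abs_measureReal_preimage_limitEquiv_sub_le (hσ : σ ∈ T.almostCompatible)
    (s : Set (ZMod (T.height l))) :
    |T.measure.real (limitEquiv σ ⁻¹' (T.proj l ⁻¹' s)) - T.measure.real (T.proj l ⁻¹' s)| ≤
      ∑' j, defect σ (j + l) := by
  have hperm := ((measurePreserving_uniform (σ l)).comp (measurePreserving_proj l))
    |>.measureReal_preimage (MeasurableSet.of_discrete (s := s)).nullMeasurableSet
  rw [(measurePreserving_proj l).measureReal_preimage
    (MeasurableSet.of_discrete (s := s)).nullMeasurableSet, ← hperm]
  have hmeas : MeasurableSet (limitEquiv σ ⁻¹' (T.proj l ⁻¹' s)) :=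
    (limitEquiv σ).measurable (measurableSet_setOf_proj l (· ∈ s))
  refine (abs_measureReal_sub_le_measureReal_symmDiff hmeas.nullMeasurableSet
    (measurableSet_setOf_proj l (σ l · ∈ s)).nullMeasurableSet).trans ?_
  refine (measureReal_mono fun x hx ↦ ?_).trans (measureReal_proj_limitEquiv_ne_le hσ l)
  rintro heq
  simp [Set.mem_symmDiff, heq] at hx

lemma measurePreserving_limitEquiv (hσ : σ ∈ T.almostCompatible) :
    MeasurePreserving (limitEquiv σ) T.measure T.measure := by
  refine ⟨(limitEquiv σ).measurable, ?_⟩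
  have := Measure.isProbabilityMeasure_map (μ := T.measure) (limitEquiv σ).measurable.aemeasurable
  refine ext_of_generate_finite T.cylinders generateFrom_cylinders
    (fun A hA B hB _ ↦ isSetAlgebra_cylinders.inter_mem hA hB) ?_ (by simp)
  rintro _ ⟨k, s, rfl⟩
  rw [(limitEquiv σ).map_apply, ← measureReal_eq_measureReal_iff, ← sub_eq_zero, ← abs_nonpos_iff]
  refine ge_of_tendsto (tendsto_sum_nat_add (defect σ)) ?_
  filter_upwards [eventually_ge_atTop k] with l hl
  obtain ⟨t, ht⟩ := exists_preimage_proj_eq_of_le hl s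
  exact ht ▸ abs_measureReal_preimage_limitEquiv_sub_le hσ t

lemma ae_limitEquiv_mul (hσ : σ ∈ T.almostCompatible) (hτ : τ ∈ T.almostCompatible) :
    ∀ᵐ x ∂T.measure, limitEquiv (σ * τ) x = limitEquiv σ (limitEquiv τ x) := by
  filter_upwards [ae_isLimitImage_limitEquiv (mul_mem hσ hτ), ae_isLimitImage_limitEquiv hτ,
    (measurePreserving_limitEquiv hτ).quasiMeasurePreserving.ae (ae_isLimitImage_limitEquiv hσ)]
    with x hστ hx hy
  exact hστ.unique (hx.mul hy)

lemma ae_limitEquiv_pow (hσ : σ ∈ T.almostCompatible) (n : ℕ) :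
    ∀ᵐ x ∂T.measure, limitEquiv (σ ^ n) x = (limitEquiv σ)^[n] x := by
  induction n with
  | zero =>
    filter_upwards [ae_isLimitImage_limitEquiv (one_mem T.almostCompatible)] with x hx
    exact pow_zero σ ▸ hx.unique (.of_forall fun k ↦ rfl)
  | succ n ih =>
    filter_upwards [ih, ae_limitEquiv_mul hσ (pow_mem hσ n)] with x hn hx
    rw [pow_succ', hx, hn, Function.iterate_succ_apply']

lemma ae_limitEquiv_eq_iterate_of_mul_eq {n : ℕ} (hσ : σ ∈ T.almostCompatible)
    (hτ : τ ∈ T.almostCompatible) (h : τ * σ = σ ^ n * τ) :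
    ∀ᵐ x ∂T.measure, limitEquiv τ (limitEquiv σ x) = (limitEquiv σ)^[n] (limitEquiv τ x) := by
  filter_upwards [ae_limitEquiv_mul hτ hσ, ae_limitEquiv_mul (pow_mem hσ n) hτ,
    (measurePreserving_limitEquiv hτ).quasiMeasurePreserving.ae (ae_limitEquiv_pow hσ n)]
    with x hleft hright hpow
  rw [← hleft, h, hright, hpow]

end CyclicTower

namespace CyclicTower

variable {T : CyclicTower} {σ : T.LevelPerm} {k l n : ℕ}

section Tolerance

variable (T) in
lemma tolerance_nonneg (k : ℕ) : 0 ≤ T.tolerance k := by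
  unfold tolerance
  positivity

lemma tolerance_add_le (j k : ℕ) : T.tolerance (j + k) ≤ T.tolerance k / 2 ^ j := by
  have hk : (0 : ℝ) < T.height k := Nat.cast_pos.2 (T.height_pos k)
  calc T.tolerance (j + k) ≤ (1 / 2) ^ (j + k + 1) / (T.height k : ℝ) ^ 2 := by
        unfold tolerance
        gcongr
        exact T.monotone_height (Nat.le_add_left k j)
    _ = T.tolerance k / 2 ^ j := by
        rw [add_assoc, pow_add, one_div_pow, tolerance]
        ring

lemma tsum_defect_le (hσ : ∀ k, defect σ k ≤ T.tolerance k) (k : ℕ) :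
    ∑' j, defect σ (j + k) ≤ 2 * T.tolerance k := by
  have hgeom := hasSum_geometric_two' (2 * T.tolerance k)
  have hle (j : ℕ) : defect σ (j + k) ≤ 2 * T.tolerance k / 2 / 2 ^ j := by
    rw [mul_div_cancel_left₀ _ two_ne_zero]
    exact (hσ _).trans (tolerance_add_le j k)
  exact ((hgeom.summable.of_nonneg_of_le (fun _ ↦ defect_nonneg _ _) hle).tsum_le_tsum hle
    hgeom.summable).trans_eq hgeom.tsum_eq

lemma mem_almostCompatible_of_eventually_le (hσ : ∀ᶠ k in atTop, defect σ k ≤ T.tolerance k) :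
    σ ∈ T.almostCompatible := by
  refine Summable.of_norm_bounded_eventually_nat (g := fun k ↦ T.tolerance 0 / 2 / 2 ^ k * 2)
    ((hasSum_geometric_two' _).summable.mul_right 2) (hσ.mono fun k hk ↦ ?_)
  rw [Real.norm_of_nonneg (defect_nonneg σ k), div_right_comm, div_mul_cancel₀ _ two_ne_zero]
  exact hk.trans (tolerance_add_le k 0)

end Tolerance

section Translation

variable (T) in
/-- Addition of `1` on every level of the tower. -/
def translation : T.LevelPerm := fun _ ↦ Equiv.addRight 1

/-- Multiplication by `n` on every level of the tower. -/
def dilation (n : ℕ) (hn : ∀ k, n.Coprime (T.height k)) : T.LevelPerm :=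
  fun k ↦ (ZMod.unitOfCoprime n (hn k)).mulLeft

lemma translation_apply (z : ZMod (T.height k)) : T.translation k z = z + 1 := rfl

lemma translation_pow_apply (n : ℕ) (z : ZMod (T.height k)) :
    (T.translation ^ n) k z = z + n := by
  induction n with
  | zero => simp
  | succ n ih =>
    rw [pow_succ', Pi.mul_apply, Equiv.Perm.mul_apply, ih, translation_apply, Nat.cast_succ,
      add_assoc]

lemma dilation_apply (hn : ∀ k, n.Coprime (T.height k)) (z : ZMod (T.height k)) :
    dilation n hn k z = n * z := rfl

lemma dilation_mul_translation (hn : ∀ k, n.Coprime (T.height k)) :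
    dilation n hn * T.translation = T.translation ^ n * dilation n hn := by
  ext k z : 2
  simp only [Pi.mul_apply, Equiv.Perm.mul_apply, translation_pow_apply, dilation_apply,
    translation_apply, mul_add_one]

lemma dilation_mem_almostCompatible
    (hprime : ∀ q, q.Prime → q ∣ n → ∀ hq : ∀ k, q.Coprime (T.height k),
      dilation q hq ∈ T.almostCompatible) (hn : ∀ k, n.Coprime (T.height k)) :
    dilation n hn ∈ T.almostCompatible := by
  induction n using Nat.recOnMul with
  | zero =>
    have hone := (Nat.coprime_zero_left _).1 (hn 1)
    exact absurd (hone ▸ T.two_pow_le_height 1) (by norm_num)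
  | one =>
    convert one_mem T.almostCompatible
    ext k z
    simp [dilation_apply]
  | prime q hq => exact hprime q hq dvd_rfl hn
  | mul a b iha ihb =>
    convert mul_mem
      (iha (fun q hq hqa ↦ hprime q hq (hqa.mul_right b)) fun k ↦ (hn k).coprime_mul_right)
      (ihb (fun q hq hqb ↦ hprime q hq (hqb.mul_left a)) fun k ↦ (hn k).coprime_mul_left)
    ext k z : 2
    simp [dilation_apply, mul_assoc]

variable (T) in
/-- The limit of the translations: the transformation whose existence the theorem asserts. -/
noncomputable def rotation : T.Space ≃ᵐ T.Space := limitEquiv T.translation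

variable (T) in
/-- The points whose first `n` images under `rotation` are not all read off correctly, on level `k`,
from the translations. -/
def drift (k n : ℕ) : Set T.Space := {x | ∃ i ≤ n, T.proj k (T.rotation^[i] x) ≠ T.proj k x + i}

lemma measurableSet_drift (k n : ℕ) : MeasurableSet (T.drift k n) := by
  simp only [drift, Set.ofPred_exists, Set.ofPred_and]
  refine .iUnion fun i ↦ .inter (.const _) (measurableSet_eq_fun ?_ ?_).compl
  · exact (measurable_proj k).comp (T.rotation.measurable.iterate i)
  · exact (Measurable.of_discrete (f := (· + (i : ZMod (T.height k))))).comp (measurable_proj k)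

lemma drift_subset (k n : ℕ) : T.drift k n ⊆ ⋃ j ∈ Finset.range n,
    T.rotation^[j] ⁻¹' {x | T.proj k (T.rotation x) ≠ T.translation k (T.proj k x)} := by
  rintro x ⟨i, hin, hi⟩
  contrapose! hi
  simp only [Set.mem_iUnion, Finset.mem_range, Set.mem_preimage, Set.mem_ofPred_eq, not_exists,
    not_not, exists_prop, not_and] at hi
  induction i with
  | zero => simp
  | succ i ih =>
    rw [Function.iterate_succ_apply', hi i hin, translation_apply, ih (Nat.le_of_succ_le hin),
      Nat.cast_succ, add_assoc]

lemma measurePreserving_rotation (hT : ∀ k, defect T.translation k ≤ T.tolerance k) :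
    MeasurePreserving T.rotation T.measure T.measure :=
  measurePreserving_limitEquiv (mem_almostCompatible_of_eventually_le (.of_forall hT))

lemma measureReal_drift_le (hT : ∀ k, defect T.translation k ≤ T.tolerance k) (k n : ℕ) :
    T.measure.real (T.drift k n) ≤ n * (2 * T.tolerance k) := by
  have hmeas : MeasurableSet {x | T.proj k (T.rotation x) ≠ T.translation k (T.proj k x)} :=
    (measurableSet_eq_fun ((measurable_proj k).comp T.rotation.measurable)
      ((Measurable.of_discrete (f := T.translation k)).comp (measurable_proj k))).compl
  refine (measureReal_mono (drift_subset k n) (measure_ne_top _ _)).trans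
    ((measureReal_biUnion_finset_le _ _).trans ?_)
  refine (Finset.sum_le_card_nsmul _ _ (2 * T.tolerance k) fun j _ ↦ ?_).trans_eq
    (by rw [Finset.card_range, nsmul_eq_mul])
  rw [((measurePreserving_rotation hT).iterate j).measureReal_preimage hmeas.nullMeasurableSet]
  exact (measureReal_proj_limitEquiv_ne_le (mem_almostCompatible_of_eventually_le (.of_forall hT))
    k).trans (tsum_defect_le hT k)

lemma measureReal_drift_le_of_le_height (hT : ∀ k, defect T.translation k ≤ T.tolerance k)
    (hn : n ≤ T.height k) : T.measure.real (T.drift k n) ≤ (1 / 2) ^ k / T.height k := by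
  have hk : (0 : ℝ) < T.height k := Nat.cast_pos.2 (T.height_pos k)
  calc T.measure.real (T.drift k n) ≤ n * (2 * T.tolerance k) := measureReal_drift_le hT k n
    _ ≤ T.height k * (2 * T.tolerance k) := by
        have := T.tolerance_nonneg k
        gcongr
    _ = (1 / 2) ^ k / T.height k := by
        rw [tolerance, pow_succ]
        field_simp

lemma isConjugateToPower_rotation (hT : ∀ k, defect T.translation k ≤ T.tolerance k)
    (hn : ∀ k, n.Coprime (T.height k)) (hdil : dilation n hn ∈ T.almostCompatible) :
    IsConjugateToPower T.rotation T.measure n :=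
  ⟨limitEquiv (dilation n hn), measurePreserving_limitEquiv hdil,
    ae_limitEquiv_eq_iterate_of_mul_eq (mem_almostCompatible_of_eventually_le (.of_forall hT)) hdil
      (dilation_mul_translation hn)⟩

end Translation

end CyclicTower

/-! ### Rank one -/

lemma image_iterate_eq_preimage_symm {X : Type*} [MeasurableSpace X] (R : X ≃ᵐ X) (i : ℕ)
    (B : Set X) : R^[i] '' B = R.symm^[i] ⁻¹' B :=
  congr_fun (Set.image_eq_preimage_of_inverse (Function.LeftInverse.iterate R.symm_apply_apply i)
    (Function.LeftInverse.iterate R.apply_symm_apply i)) B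

namespace CyclicTower

variable {T : CyclicTower} {k i j : ℕ} {x : T.Space}

section RankOne

variable (T) in
/-- The base of the `k`-th Rokhlin tower: the points over `0` whose orbit follows the level-`k`
translations until it returns to `0`. -/
def base (k : ℕ) : Set T.Space := {x | T.proj k x = 0} \ T.drift k (T.height k)

lemma measurableSet_base (k : ℕ) : MeasurableSet (T.base k) :=
  (measurableSet_setOf_proj k (· = 0)).diff (measurableSet_drift k _)

lemma measurableSet_image_base (k i : ℕ) : MeasurableSet (T.rotation^[i] '' T.base k) := by
  rw [image_iterate_eq_preimage_symm]
  exact (T.rotation.symm.measurable.iterate i) (measurableSet_base k)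

lemma proj_of_mem_image_base (hi : i ≤ T.height k) (hx : x ∈ T.rotation^[i] '' T.base k) :
    T.proj k x = i := by
  obtain ⟨y, ⟨hy0, hy⟩, rfl⟩ := hx
  contrapose! hy
  refine ⟨i, hi, ?_⟩
  rwa [hy0, zero_add]

lemma disjoint_image_base (hi : i < T.height k) (hj : j < T.height k) (hij : i ≠ j) :
    Disjoint (T.rotation^[i] '' T.base k) (T.rotation^[j] '' T.base k) := by
  refine Set.disjoint_left.2 fun x hxi hxj ↦ hij ?_
  have hcast := (proj_of_mem_image_base hi.le hxi).symm.trans (proj_of_mem_image_base hj.le hxj)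
  rwa [ZMod.natCast_eq_natCast_iff', Nat.mod_eq_of_lt hi, Nat.mod_eq_of_lt hj] at hcast

lemma le_measureReal_image_base (hT : ∀ k, defect T.translation k ≤ T.tolerance k) (k i : ℕ) :
    (1 - (1 / 2) ^ k) / T.height k ≤ T.measure.real (T.rotation^[i] '' T.base k) := by
  rw [image_iterate_eq_preimage_symm, ((measurePreserving_rotation hT).symm.iterate i
    |>.measureReal_preimage (measurableSet_base k).nullMeasurableSet), sub_div]
  refine le_trans ?_ le_measureReal_sdiff
  gcongr
  · rw [measureReal_def, measure_setOf_proj_eq, ENNReal.toReal_inv, ENNReal.toReal_natCast, one_div]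
  · exact measureReal_drift_le_of_le_height hT le_rfl

lemma measureReal_compl_iUnion_image_base_le
    (hT : ∀ k, defect T.translation k ≤ T.tolerance k) (k : ℕ) :
    T.measure.real (⋃ i ∈ Finset.range (T.height k), T.rotation^[i] '' T.base k)ᶜ ≤
      (1 / 2) ^ k := by
  have hk : (T.height k : ℝ) ≠ 0 := Nat.cast_ne_zero.2 (T.height_pos k).ne'
  rw [probReal_compl_eq_one_sub (Finset.measurableSet_biUnion _ fun i _ ↦
    measurableSet_image_base k i), measureReal_biUnion_finset
    (fun i hi j hj hij ↦ disjoint_image_base (by simpa using hi) (by simpa using hj) hij)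
    (fun i _ ↦ measurableSet_image_base k i), sub_le_comm]
  refine le_trans (le_of_eq ?_)
    (Finset.card_nsmul_le_sum _ _ _ fun i _ ↦ le_measureReal_image_base hT k i)
  rw [Finset.card_range, nsmul_eq_mul, mul_div_cancel₀ _ hk]

open Classical in
/-- The indices below the height of the `k`-th Rokhlin tower whose residue lies in `s`. -/
noncomputable def levelsOver (s : Set (ZMod (T.height k))) : Finset ℕ :=
  {i ∈ Finset.range (T.height k) | ((i : ℕ) : ZMod (T.height k)) ∈ s}

lemma mem_levelsOver {s : Set (ZMod (T.height k))} :
    i ∈ levelsOver s ↔ i < T.height k ∧ (i : ZMod (T.height k)) ∈ s := by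
  simp only [levelsOver, Finset.mem_filter, Finset.mem_range]

lemma symmDiff_biUnion_image_base_subset (A : Set T.Space) (s : Set (ZMod (T.height k))) :
    symmDiff A (⋃ i ∈ levelsOver s, T.rotation^[i] '' T.base k) ⊆
      symmDiff A (T.proj k ⁻¹' s) ∪
        (⋃ i ∈ Finset.range (T.height k), T.rotation^[i] '' T.base k)ᶜ := by
  intro x hx
  refine or_iff_not_imp_right.2 fun hU ↦ ?_
  obtain ⟨i, hi, hxi⟩ := Set.mem_iUnion₂.1 (not_not.1 hU)
  have hproj := proj_of_mem_image_base (Finset.mem_range.1 hi).le hxi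
  have hmem : (x ∈ ⋃ i ∈ levelsOver s, T.rotation^[i] '' T.base k) ↔ x ∈ T.proj k ⁻¹' s := by
    refine ⟨fun h ↦ ?_, fun h ↦
      Set.mem_biUnion (mem_levelsOver.2 ⟨Finset.mem_range.1 hi, hproj ▸ h⟩) hxi⟩
    obtain ⟨j, hj, hxj⟩ := Set.mem_iUnion₂.1 h
    rw [mem_levelsOver] at hj
    rw [Set.mem_preimage, proj_of_mem_image_base hj.1.le hxj]
    exact hj.2
  rwa [Set.mem_symmDiff, hmem, ← Set.mem_symmDiff] at hx

lemma isRankOne_rotation (hT : ∀ k, defect T.translation k ≤ T.tolerance k) :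
    IsRankOne T.rotation T.measure := by
  intro ε hε N A hA
  have hpow : ∀ᶠ k in atTop, ENNReal.ofReal ((1 / 2) ^ k) < ε / 2 := by
    refine Tendsto.eventually_lt_const (ENNReal.half_pos hε.ne') ?_
    simpa using ENNReal.tendsto_ofReal
      (tendsto_pow_atTop_nhds_zero_of_lt_one (r := (1 / 2 : ℝ)) (by norm_num) (by norm_num))
  obtain ⟨k, hk, happrox⟩ := (hpow.and (eventually_all.2 fun j ↦
    eventually_exists_measure_symmDiff_lt (hA j) (ENNReal.half_pos hε.ne'))).exists
  refine ⟨T.base k, T.height k, measurableSet_base k, T.height_pos k,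
    fun i hi j hj ↦ disjoint_image_base hi hj, fun j ↦ ?_⟩
  obtain ⟨s, hs⟩ := happrox j
  refine ⟨levelsOver s, fun i hi ↦ (mem_levelsOver.1 hi).1, ?_⟩
  calc _ ≤ T.measure (symmDiff (A j) (T.proj k ⁻¹' s)) +
        T.measure (⋃ i ∈ Finset.range (T.height k), T.rotation^[i] '' T.base k)ᶜ :=
        (measure_mono (symmDiff_biUnion_image_base_subset (A j) s)).trans (measure_union_le _ _)
    _ < ε / 2 + ε / 2 := ENNReal.add_lt_add hs ((ENNReal.le_ofReal_iff_toReal_le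
        (measure_ne_top _ _) (by positivity)).2
        (measureReal_compl_iUnion_image_base_le hT k) |>.trans_lt hk)
    _ = ε := ENNReal.add_halves ε

end RankOne

end CyclicTower

/-! ### Weak mixing -/

section Mixing

variable {X ι : Type*} [MeasurableSpace X] {μ : Measure X} {l : Filter ι}

lemma tendsto_clm_of_tendsto_indicatorConstLp {E F : Type*} [NormedAddCommGroup E]
    [NormedSpace ℝ E] [NormedAddCommGroup F] [NormedSpace ℝ F] {p : ℝ≥0∞} [Fact (1 ≤ p)]
    (hp : p ≠ ∞) {φ : ι → Lp E p μ →L[ℝ] F} {ψ : Lp E p μ →L[ℝ] F} {C : ℝ} (hφ : ∀ i, ‖φ i‖ ≤ C)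
    (h : ∀ s (hs : MeasurableSet s) (hμs : μ s ≠ ∞) (c : E),
      Tendsto (fun i ↦ φ i (indicatorConstLp p hs hμs c)) l
        (nhds (ψ (indicatorConstLp p hs hμs c)))) (f : Lp E p μ) :
    Tendsto (fun i ↦ φ i f) l (nhds (ψ f)) := by
  have hbdd : ∃ C, ∀ i, ‖φ i‖ ≤ C := ⟨C, hφ⟩
  induction f using Lp.induction hp with
  | indicatorConst c hs hμs =>
    rw [Lp.simpleFunc.coe_indicatorConst]
    exact h _ hs hμs.ne c
  | add f g _ hf hg => simpa only [map_add] using hf.add hg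
  | isClosed =>
    exact Equicontinuous.isClosed_setOfPred_tendsto
      (((NormedSpace.equicontinuous_TFAE φ).out 5 1).1 hbdd) ψ.continuous

variable [IsFiniteMeasure μ] {S : ι → X → X}

lemma tendsto_inner_compMeasurePreserving (hS : ∀ i, MeasurePreserving (S i) μ μ)
    (hmix : ∀ A B, MeasurableSet A → MeasurableSet B →
      Tendsto (fun i ↦ μ.real (A ∩ S i ⁻¹' B)) l (nhds (μ.real A * μ.real B)))
    (f g : Lp ℝ 2 μ) :
    Tendsto (fun i ↦ inner ℝ f (Lp.compMeasurePreserving (S i) (hS i) g)) l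
      (nhds ((∫ x, f x ∂μ) * ∫ x, g x ∂μ)) := by
  let one : Lp ℝ 2 μ := indicatorConstLp 2 .univ (measure_ne_top μ _) 1
  have hone (f : Lp ℝ 2 μ) : ∫ x, f x ∂μ = innerSL ℝ one f := by
    rw [innerSL_apply_apply, L2.inner_indicatorConstLp_one, setIntegral_univ]
  let V (i : ι) : Lp ℝ 2 μ →ₗᵢ[ℝ] Lp ℝ 2 μ := Lp.compMeasurePreservingₗᵢ ℝ (S i) (hS i)
  rw [hone, hone]
  refine tendsto_clm_of_tendsto_indicatorConstLp (by simp) (C := ‖f‖)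
    (φ := fun i ↦ innerSL ℝ f ∘L (V i).toContinuousLinearMap)
    (ψ := innerSL ℝ one f • innerSL ℝ one) (fun i ↦ ?_) (fun B hB hμB d ↦ ?_) g
  · grw [ContinuousLinearMap.opNorm_comp_le, LinearIsometry.norm_toContinuousLinearMap_le,
      innerSL_apply_norm, mul_one]
  set g := indicatorConstLp 2 hB hμB d with hg
  have hf := tendsto_clm_of_tendsto_indicatorConstLp (l := l) (by simp) (C := ‖g‖)
    (φ := fun i ↦ innerSL ℝ (V i g)) (ψ := innerSL ℝ one g • innerSL ℝ one)
    (fun i ↦ ((innerSL_apply_norm ..).trans ((V i).norm_map g)).le) (fun A hA hμA c ↦ ?_) f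
  · simpa [real_inner_comm, mul_comm] using hf
  · have hgA (i : ι) : innerSL ℝ (V i g) (indicatorConstLp 2 hA hμA c) =
        μ.real (A ∩ S i ⁻¹' B) * (c * d) := by
      rw [innerSL_apply_apply, real_inner_comm]
      change inner ℝ _ (Lp.compMeasurePreserving (S i) (hS i) g) = _
      rw [hg, Lp.indicatorConstLp_compMeasurePreserving, L2.inner_indicatorConstLp_indicatorConstLp]
      simp [mul_comm d]
    have honeA : (innerSL ℝ one g • innerSL ℝ one) (indicatorConstLp 2 hA hμA c) =
        μ.real A * μ.real B * (c * d) := by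
      simp only [_root_.smul_apply, innerSL_apply_apply, one, hg, smul_eq_mul,
        L2.inner_indicatorConstLp_indicatorConstLp, Set.univ_inter]
      simp
      ring
    simpa only [hgA, honeA] using (hmix A B hA hB).mul_const (c * d)

lemma tendsto_integral_mul_comp (hS : ∀ i, MeasurePreserving (S i) μ μ)
    (hmix : ∀ A B, MeasurableSet A → MeasurableSet B →
      Tendsto (fun i ↦ μ.real (A ∩ S i ⁻¹' B)) l (nhds (μ.real A * μ.real B)))
    (f g : Lp ℝ 2 μ) :
    Tendsto (fun i ↦ ∫ x, f x * g (S i x) ∂μ) l (nhds ((∫ x, f x ∂μ) * ∫ x, g x ∂μ)) := by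
  refine (tendsto_inner_compMeasurePreserving hS hmix f g).congr fun i ↦ ?_
  rw [L2.inner_def]
  refine integral_congr_ae ?_
  filter_upwards [Lp.coeFn_compMeasurePreserving g (hS i)] with x hx
  rw [hx]
  simp [mul_comm]

end Mixing

section Correlation

variable {X : Type*} [MeasurableSpace X] {μ : Measure X} [IsProbabilityMeasure μ] {S : X → X}

/-- The covariance of the indicators of `A` and of the preimage of `B` under `S`. -/
noncomputable def correlation (μ : Measure X) (S : X → X) (A B : Set X) : ℝ :=
  μ.real (A ∩ S ⁻¹' B) - μ.real A * μ.real B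

lemma abs_correlation_sub_correlation_le (hS : MeasurePreserving S μ μ) {A A' B B' : Set X}
    (hA : MeasurableSet A) (hA' : MeasurableSet A') (hB : MeasurableSet B)
    (hB' : MeasurableSet B') :
    |correlation μ S A B - correlation μ S A' B'| ≤
      2 * (μ.real (symmDiff A A') + μ.real (symmDiff B B')) := by
  have hAA' := abs_measureReal_sub_le_measureReal_symmDiff (μ := μ) hA.nullMeasurableSet
    hA'.nullMeasurableSet
  have hBB' := abs_measureReal_sub_le_measureReal_symmDiff (μ := μ) hB.nullMeasurableSet
    hB'.nullMeasurableSet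
  have hinter : |μ.real (A ∩ S ⁻¹' B) - μ.real (A' ∩ S ⁻¹' B')| ≤
      μ.real (symmDiff A A') + μ.real (symmDiff B B') := by
    rw [← hS.measureReal_preimage (hB.symmDiff hB').nullMeasurableSet]
    refine (abs_measureReal_sub_le_measureReal_symmDiff
      (hA.inter (hS.measurable hB)).nullMeasurableSet
      (hA'.inter (hS.measurable hB')).nullMeasurableSet).trans
      ((measureReal_mono fun x ↦ ?_).trans (measureReal_union_le _ _))
    simp only [Set.mem_symmDiff, Set.mem_inter_iff, Set.mem_union, Set.mem_preimage]
    tauto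
  have hmul : |μ.real A * μ.real B - μ.real A' * μ.real B'| ≤
      μ.real (symmDiff A A') + μ.real (symmDiff B B') := by
    calc |μ.real A * μ.real B - μ.real A' * μ.real B'|
        = |(μ.real A - μ.real A') * μ.real B + μ.real A' * (μ.real B - μ.real B')| := by
          congr 1; ring
      _ ≤ |μ.real A - μ.real A'| * μ.real B + μ.real A' * |μ.real B - μ.real B'| := by
          refine (abs_add_le _ _).trans_eq ?_
          rw [abs_mul, abs_mul, abs_of_nonneg (measureReal_nonneg (s := B)),
            abs_of_nonneg (measureReal_nonneg (s := A'))]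
      _ ≤ μ.real (symmDiff A A') * 1 + 1 * μ.real (symmDiff B B') := by
          gcongr <;> exact measureReal_le_one
      _ = _ := by ring
  calc _ = |(μ.real (A ∩ S ⁻¹' B) - μ.real (A' ∩ S ⁻¹' B')) -
        (μ.real A * μ.real B - μ.real A' * μ.real B')| := by
        unfold correlation
        congr 1
        ring
    _ ≤ _ := (abs_sub _ _).trans ((add_le_add hinter hmul).trans_eq (two_mul _).symm)

lemma abs_measureReal_sub_le_card_mul {α : Type*} [Fintype α] [MeasurableSpace α]
    [MeasurableSingletonClass α] {μ ν : Measure α} [IsFiniteMeasure μ] [IsFiniteMeasure ν] {ε : ℝ}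
    (h : ∀ a, |μ.real {a} - ν.real {a}| ≤ ε) (s : Set α) :
    |μ.real s - ν.real s| ≤ Fintype.card α * ε := by
  classical
  have hsum (ρ : Measure α) [IsFiniteMeasure ρ] : ρ.real s = ∑ a ∈ s.toFinset, ρ.real {a} := by
    rw [sum_measureReal_singleton, Set.coe_toFinset]
  calc |μ.real s - ν.real s| ≤ ∑ a ∈ s.toFinset, |μ.real {a} - ν.real {a}| := by
        rw [hsum, hsum, ← Finset.sum_sub_distrib]
        exact Finset.abs_sum_le_sum_abs _ _
    _ ≤ ∑ a, |μ.real {a} - ν.real {a}| :=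
        Finset.sum_le_univ_sum_of_nonneg fun _ ↦ abs_nonneg _
    _ ≤ Fintype.card α * ε := by
        simpa using Finset.sum_le_card_nsmul Finset.univ _ ε fun a _ ↦ h a

end Correlation

namespace CyclicTower

variable {T : CyclicTower} {m : ℕ → ℕ} {k n : ℕ}

section Mixing

lemma abs_measureReal_inter_preimage_rotation_sub_le
    (hT : ∀ k, defect T.translation k ≤ T.tolerance k) (hn : n ≤ T.height (k + 1))
    (s s' : Set (ZMod (T.height k))) :
    |T.measure.real (T.proj k ⁻¹' s ∩ T.rotation^[n] ⁻¹' (T.proj k ⁻¹' s')) -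
      (uniform (ZMod (T.height (k + 1)))).real
        {z | T.reduce k z ∈ s ∧ T.reduce k (z + n) ∈ s'}| ≤ (1 / 2) ^ (k + 1) := by
  have hpos : (1 : ℝ) ≤ T.height (k + 1) := Nat.one_le_cast.2 (T.height_pos _)
  rw [← measureReal_setOf_proj]
  refine (abs_measureReal_sub_le_measureReal_symmDiff ?_
    (measurableSet_setOf_proj (k + 1) fun z ↦
      T.reduce k z ∈ s ∧ T.reduce k (z + n) ∈ s').nullMeasurableSet).trans <|
    (measureReal_mono (s₂ := T.drift (k + 1) n) (fun x hx ↦ ?_) (measure_ne_top _ _)).trans <|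
    (measureReal_drift_le_of_le_height hT hn).trans (div_le_self (by positivity) hpos)
  · exact ((measurableSet_setOf_proj k (· ∈ s)).inter
      (T.rotation.measurable.iterate n (measurableSet_setOf_proj k (· ∈ s')))).nullMeasurableSet
  · refine ⟨n, le_rfl, fun hxn ↦ ?_⟩
    simp only [Set.mem_symmDiff, Set.mem_inter_iff, Set.mem_preimage, Set.mem_ofPred_eq, ← hxn,
      reduce_proj, and_not_self, or_self] at hx

lemma abs_uniform_reduce_sub_le
    (hmix : ∀ a b, |(uniform (ZMod (T.height (k + 1)))).real
      {x | T.reduce k x = a ∧ T.reduce k (x + n) = b} - 1 / (T.height k : ℝ) ^ 2| ≤ T.tolerance k)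
    (s s' : Set (ZMod (T.height k))) :
    |(uniform (ZMod (T.height (k + 1)))).real {z | T.reduce k z ∈ s ∧ T.reduce k (z + n) ∈ s'} -
      (uniform (ZMod (T.height k))).real s * (uniform (ZMod (T.height k))).real s'| ≤
        (1 / 2) ^ (k + 1) := by
  let pair (z : ZMod (T.height (k + 1))) := (T.reduce k z, T.reduce k (z + n))
  have hpair : Measurable pair := .of_discrete
  have : IsProbabilityMeasure ((uniform (ZMod (T.height (k + 1)))).map pair) :=
    Measure.isProbabilityMeasure_map hpair.aemeasurable
  have hlaw := abs_measureReal_sub_le_card_mul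
    (μ := (uniform (ZMod (T.height (k + 1)))).map pair)
    (ν := uniform (ZMod (T.height k) × ZMod (T.height k))) (ε := T.tolerance k)
    (fun c ↦ ?_) (s ×ˢ s')
  · rw [map_measureReal_apply hpair .of_discrete, uniform_prod, measureReal_prod_prod] at hlaw
    refine hlaw.trans_eq ?_
    have hk : (T.height k : ℝ) ≠ 0 := Nat.cast_ne_zero.2 (T.height_pos k).ne'
    rw [Fintype.card_prod, ZMod.card, Nat.cast_mul, tolerance]
    field_simp
  · have hpre : pair ⁻¹' {c} = {x | T.reduce k x = c.1 ∧ T.reduce k (x + n) = c.2} := by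
      ext x
      simp [pair, Prod.ext_iff]
    have huniform : (uniform (ZMod (T.height k) × ZMod (T.height k))).real {c} =
        1 / (T.height k : ℝ) ^ 2 := by
      rw [measureReal_def, uniform_singleton, Fintype.card_prod, ZMod.card, ENNReal.toReal_inv,
        ENNReal.toReal_natCast, Nat.cast_mul, ← sq, one_div]
    rw [map_measureReal_apply hpair .of_discrete, hpre, huniform]
    exact hmix c.1 c.2

lemma abs_correlation_cylinder_le
    (hT : ∀ k, defect T.translation k ≤ T.tolerance k) (hn : n ≤ T.height (k + 1))
    (hmix : ∀ a b, |(uniform (ZMod (T.height (k + 1)))).real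
      {x | T.reduce k x = a ∧ T.reduce k (x + n) = b} - 1 / (T.height k : ℝ) ^ 2| ≤ T.tolerance k)
    (s s' : Set (ZMod (T.height k))) :
    |correlation T.measure T.rotation^[n] (T.proj k ⁻¹' s) (T.proj k ⁻¹' s')| ≤ (1 / 2) ^ k := by
  have hproj (t : Set (ZMod (T.height k))) : T.measure.real (T.proj k ⁻¹' t) =
      (uniform (ZMod (T.height k))).real t := measureReal_setOf_proj k (· ∈ t)
  rw [correlation, hproj, hproj]
  refine (abs_sub_le _ _ _).trans ((add_le_add
    (abs_measureReal_inter_preimage_rotation_sub_le hT hn s s')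
    (abs_uniform_reduce_sub_le hmix s s')).trans_eq ?_)
  rw [pow_succ]
  ring

lemma tendsto_correlation_rotation (hT : ∀ k, defect T.translation k ≤ T.tolerance k)
    (hm : ∀ k, m k ≤ T.height (k + 1))
    (hmix : ∀ k a b, |(uniform (ZMod (T.height (k + 1)))).real
      {x | T.reduce k x = a ∧ T.reduce k (x + m k) = b} - 1 / (T.height k : ℝ) ^ 2| ≤
        T.tolerance k)
    {A B : Set T.Space} (hA : MeasurableSet A) (hB : MeasurableSet B) :
    Tendsto (fun k ↦ correlation T.measure T.rotation^[m k] A B) atTop (nhds 0) := by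
  refine Metric.tendsto_nhds.2 fun ε hε ↦ ?_
  have hε' : 0 < ENNReal.ofReal (ε / 8) := ENNReal.ofReal_pos.2 (by positivity)
  have hsmall := (tendsto_pow_atTop_nhds_zero_of_lt_one (r := (1 / 2 : ℝ)) (by norm_num)
    (by norm_num)).eventually_lt_const (half_pos hε)
  filter_upwards [eventually_exists_measure_symmDiff_lt hA hε',
    eventually_exists_measure_symmDiff_lt hB hε', hsmall] with k ⟨s, hs⟩ ⟨s', hs'⟩ hk
  set A' := T.proj k ⁻¹' s
  set B' := T.proj k ⁻¹' s'
  have happrox : |correlation T.measure T.rotation^[m k] A B -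
      correlation T.measure T.rotation^[m k] A' B'| ≤
        2 * (T.measure.real (symmDiff A A') + T.measure.real (symmDiff B B')) :=
    abs_correlation_sub_correlation_le ((measurePreserving_rotation hT).iterate (m k)) hA
      (measurableSet_setOf_proj k (· ∈ s)) hB (measurableSet_setOf_proj k (· ∈ s'))
  have hcyl : |correlation T.measure T.rotation^[m k] A' B'| ≤ (1 / 2) ^ k :=
    abs_correlation_cylinder_le hT (hm k) (hmix k) s s'
  have hAA' : T.measure.real (symmDiff A A') < ε / 8 := ENNReal.toReal_lt_of_lt_ofReal hs
  have hBB' : T.measure.real (symmDiff B B') < ε / 8 := ENNReal.toReal_lt_of_lt_ofReal hs'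
  rw [Real.dist_0_eq_abs]
  linarith [abs_sub_abs_le_abs_sub (correlation T.measure T.rotation^[m k] A B)
    (correlation T.measure T.rotation^[m k] A' B')]

lemma isWeaklyMixing_rotation (hT : ∀ k, defect T.translation k ≤ T.tolerance k)
    (hm : ∀ k, m k ≤ T.height (k + 1))
    (hmix : ∀ k a b, |(uniform (ZMod (T.height (k + 1)))).real
      {x | T.reduce k x = a ∧ T.reduce k (x + m k) = b} - 1 / (T.height k : ℝ) ^ 2| ≤
        T.tolerance k) : IsWeaklyMixing T.rotation T.measure := by
  refine ⟨fun k ↦ m k, fun f g ↦ ?_⟩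
  refine (tendsto_integral_mul_comp (fun k ↦ (measurePreserving_rotation hT).iterate (m k))
    (fun A B hA hB ↦ ?_) f g).congr fun k ↦ ?_
  · exact tendsto_sub_nhds_zero_iff.1 (tendsto_correlation_rotation hT hm hmix hA hB)
  · rw [zpow_natCast, ← Equiv.Perm.iterate_eq_pow]
    rfl

end Mixing

end CyclicTower

namespace CyclicTower

variable {T : CyclicTower} {P : Set ℕ} {k n : ℕ}

section TowerStep

lemma defect_translation_le {m : ℕ} (h : IsTowerStep P k (T.equiv k) m (T.tolerance k)) :
    defect T.translation k ≤ T.tolerance k := h.add_one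

lemma defect_dilation_le {m q : ℕ} (h : IsTowerStep P k (T.equiv k) m (T.tolerance k))
    (hq : q.Prime) (hqP : q ∉ P) (hqk : q ≤ k) (hqT : ∀ k, q.Coprime (T.height k)) :
    defect (dilation q hqT) k ≤ T.tolerance k := h.natCast_mul q hq hqP hqk

lemma dilation_mem_almostCompatible_of_isTowerStep {m : ℕ → ℕ}
    (hstep : ∀ k, IsTowerStep P k (T.equiv k) (m k) (T.tolerance k)) (hnP : ∀ p ∈ P, ¬p ∣ n)
    (hn : ∀ k, n.Coprime (T.height k)) : dilation n hn ∈ T.almostCompatible :=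
  dilation_mem_almostCompatible (fun q hq hqn hqT ↦
    mem_almostCompatible_of_eventually_le <| (eventually_ge_atTop q).mono fun k hqk ↦
      defect_dilation_le (hstep k) hq (fun hqP ↦ hnP q hqP hqn) hqk hqT) hn

end TowerStep

end CyclicTower

end RankOne

open RankOne RankOne.CyclicTower in
theorem exists_rank_one_weakly_mixing_conjugate_to_powers_general (P : Set ℕ)
    (hP : ∀ p ∈ P, p.Prime) (hPinf : P.Infinite) :
    ∃ (X : Type) (_ : MeasurableSpace X) (μ : Measure X),
      StandardBorelSpace X ∧ IsProbabilityMeasure μ ∧ NullSingletonClass μ ∧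
      ∃ R : X ≃ᵐ X, MeasurePreserving R μ μ ∧ IsRankOne R μ ∧
        IsWeaklyMixing R μ ∧
        ∀ n, (∀ p ∈ P, ¬p ∣ n) → IsConjugateToPower R μ n := by
  obtain ⟨T, m, hTP, hstep⟩ := exists_forall_isTowerStep hP hPinf
  have hT (k : ℕ) := defect_translation_le (hstep k)
  refine ⟨T.Space, inferInstance, T.measure, inferInstance, inferInstance, inferInstance,
    T.rotation, measurePreserving_rotation hT,
    isRankOne_rotation hT,
    isWeaklyMixing_rotation hT (fun k ↦ (hstep k).lt.le)
      fun k ↦ (hstep k).add_natCast, fun n hnP ↦ ?_⟩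
  have hn (k : ℕ) : n.Coprime (T.height k) :=
    Nat.coprime_of_dvd fun p hp hpn hpT ↦ hnP p (hTP k p hp hpT) hpn
  exact isConjugateToPower_rotation hT hn
    (dilation_mem_almostCompatible_of_isTowerStep hstep hnP hn)

/-- Theorem 6 of the paper.  Let `P` and `Q` be disjoint sets of
primes with `P` infinite.  Then there is an invertible bimeasurable measure-preserving
transformation `R` of a standard atomless probability space `(X, μ)` such that:
(i) `R` has rank one; (ii) `R` is weakly mixing (there is a mixing sequence `m i` of
integers along which correlations of any `f, g ∈ L²` converge to the product of the
integrals); and (iii) for every `n ∈ Q` there is an invertible bimeasurable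
measure-preserving `Ψ` with `Ψ ∘ R = R^[n] ∘ Ψ` a.e., so `R` is conjugate to `R^n`. -/
theorem exists_rank_one_weakly_mixing_conjugate_to_powers
    (P Q : Set ℕ) (hP : ∀ p ∈ P, p.Prime) (hQ : ∀ q ∈ Q, q.Prime)
    (hPQ : Disjoint P Q) (hPinf : P.Infinite) :
    ∃ (X : Type) (_ : MeasurableSpace X) (μ : Measure X),
      StandardBorelSpace X ∧ IsProbabilityMeasure μ ∧ NoAtoms μ ∧
      ∃ R : X ≃ᵐ X, MeasurePreserving R μ μ ∧
        -- (i) rank one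
        (∀ ε : ℝ≥0∞, 0 < ε → ∀ (k : ℕ) (A : Fin k → Set X),
          (∀ j, MeasurableSet (A j)) →
          ∃ (B : Set X) (h : ℕ), MeasurableSet B ∧ 1 ≤ h ∧
            (∀ i < h, ∀ j < h, i ≠ j → Disjoint ((⇑R)^[i] '' B) ((⇑R)^[j] '' B)) ∧
            ∀ j, ∃ s : Finset ℕ, (∀ i ∈ s, i < h) ∧
              μ (symmDiff (A j) (⋃ i ∈ s, (⇑R)^[i] '' B)) < ε) ∧
        -- (ii) weak mixing via a mixing sequence of integers
        (∃ m : ℕ → ℤ, ∀ f g : Lp ℝ 2 μ,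
          Tendsto (fun i => ∫ x, f x * g ((R.toEquiv ^ m i) x) ∂μ) atTop
            (nhds ((∫ x, f x ∂μ) * ∫ x, g x ∂μ))) ∧
        -- (iii) conjugate to its powers along Q
        (∀ n ∈ Q, ∃ Ψ : X ≃ᵐ X, MeasurePreserving Ψ μ μ ∧
          ∀ᵐ x ∂μ, Ψ (R x) = (⇑R)^[n] (Ψ x)) := by
  obtain ⟨X, _, μ, hX, hμ, hatoms, R, hR, hrank, hmix, hconj⟩ :=
    exists_rank_one_weakly_mixing_conjugate_to_powers_general P hP hPinf
  exact ⟨X, _, μ, hX, hμ, hatoms, R, hR, hrank, hmix, fun n hn ↦ hconj n fun p hp hpn ↦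
    hPQ.ne_of_mem hp hn ((Nat.prime_dvd_prime_iff_eq (hP p hp) (hQ n hn)).1 hpn)⟩
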